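/- Let Ω be a lattice in ℂ with Weierstrass function ℘ and invariants g₂, g₃. Let p ∈ ℂ ∖ Ω, and assume that g₂, g₃ and ℘(p) are algebraic over ℚ. Then p is transcendental over ℚ. -/

import Mathlib

/-! The proof is Schneider's method, applied to the two functions `z` and `℘(z)`.

Suppose `p` is algebraic. Then `p`, `g₂`, `℘(p)` and, by the Weierstrass equation, `℘'(p)` lie in a
number field `K`. There are infinitely many points of `K` off the lattice at which `℘` and `℘'` take
values in `K` (`PeriodPair.exists_points`): translates of `p` by multiples of a period `n p` if there
is one, and otherwise the points `2ᵏ p`, by the duplication formula. On the other hand `z` and `℘(z)`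
are algebraically independent (`PeriodPair.algIndep`). These two facts are incompatible
(`schneider_core`).

The arithmetic input is the equation `℘'' = 6 ℘² - g₂ / 2`. At each of the points it makes the Taylor
expansion of `℘` a power series over `K`, and it controls the denominators (`hInt_ode`) and the
conjugates (`exists_hBd_ode`) of the coefficients. Siegel's lemma then gives a nonzero polynomial in
`z` and `℘(z)`, of degree less than `L` in each, with small integral coefficients, that vanishes to
order `T` at `m` of the points, where `L² = 2 m T` (`exists_aux`). The analytic input is that
`℘ = Q / σ²` with `σ` and `Q = σ'² - σ σ''` entire of order at most three
(`PeriodPair.exists_growth`), so that multiplication by `σ ^ (2 L)` turns the polynomial into an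
entire function. Let `t ≥ T` be the smallest order of vanishing at the `m` points. The Taylor
coefficient of order `t` is bounded above by Schwarz's lemma on the disc of radius `t ^ (1/8)`
(`schwarz_bound`) and below by Liouville's inequality (`liouville_ineq`). The two bounds contradict
each other once `m` is large enough in terms of `[K : ℚ]` and `T` is large enough.

The growth estimates come from the product for `σ`, and the termwise derivative `(σ'/σ)' = -℘`
identifies `wP` with Mathlib's `PeriodPair.weierstrassP` (`wP_eq`). The duplication formula is the
diagonal limit of the addition theorem, for which Euler's argument is used (`PeriodPair.addition`). -/

open Complex

noncomputable section

/-- The lattice `ℤω₁ + ℤω₂`, as a set of complex numbers. -/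
def LatticePts (ω₁ ω₂ : ℂ) : Set ℂ := {z | ∃ m n : ℤ, z = m * ω₁ + n * ω₂}

/-- `ω₁, ω₂` are the basis of a lattice: they are `ℝ`-linearly independent. -/
def IsLatticeBasis (ω₁ ω₂ : ℂ) : Prop := LinearIndependent ℝ ![ω₁, ω₂]

/-- The nonzero lattice points. -/
def LatticePts' (ω₁ ω₂ : ℂ) : Set ℂ := {w | w ∈ LatticePts ω₁ ω₂ ∧ w ≠ 0}

/-- The Weierstrass sigma function of the lattice `ℤω₁ + ℤω₂`:
`σ(z) = z ∏_{ω ∈ Ω∖{0}} (1 − z/ω) exp(z/ω + z²/(2ω²))`. -/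
def wSigma (ω₁ ω₂ : ℂ) (z : ℂ) : ℂ :=
  z * ∏' w : LatticePts' ω₁ ω₂,
    (1 - z / (w : ℂ)) * Complex.exp (z / w + z ^ 2 / (2 * (w : ℂ) ^ 2))

/-- The Weierstrass zeta function `ζ = σ'/σ`. -/
def wZeta (ω₁ ω₂ : ℂ) (z : ℂ) : ℂ := deriv (wSigma ω₁ ω₂) z / wSigma ω₁ ω₂ z

/-- The Weierstrass elliptic function `℘ = -ζ'`. -/
def wP (ω₁ ω₂ : ℂ) (z : ℂ) : ℂ := - deriv (wZeta ω₁ ω₂) z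

/-- The invariant `g₂ = 60 Σ_{ω ∈ Ω∖{0}} ω⁻⁴` of the lattice. -/
def g2 (ω₁ ω₂ : ℂ) : ℂ := 60 * ∑' w : LatticePts' ω₁ ω₂, ((w : ℂ) ^ 4)⁻¹

/-- The invariant `g₃ = 140 Σ_{ω ∈ Ω∖{0}} ω⁻⁶` of the lattice. -/
def g3 (ω₁ ω₂ : ℂ) : ℂ := 140 * ∑' w : LatticePts' ω₁ ω₂, ((w : ℂ) ^ 6)⁻¹

/-- The quasi-period `η(ω) = ζ(z + ω) − ζ(z)` (independent of `z`; we evaluate at the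
point `(ω₁+ω₂)/3`, which is never a pole of `ζ`, nor is its translate by a lattice point). -/
def wEta (ω₁ ω₂ : ℂ) (ω : ℂ) : ℂ :=
  wZeta ω₁ ω₂ ((ω₁ + ω₂) / 3 + ω) - wZeta ω₁ ω₂ ((ω₁ + ω₂) / 3)

/-- The field of endomorphisms `k = {α ∈ ℂ : αΩ ⊆ Ω} ⊗_ℤ ℚ`, as a set of complex numbers:
the `α ∈ ℂ` such that `mα` stabilizes the lattice for some nonzero integer `m`. -/
def endQ (ω₁ ω₂ : ℂ) : Set ℂ :=
  {α | ∃ m : ℤ, m ≠ 0 ∧ ∀ w ∈ LatticePts ω₁ ω₂, (m : ℂ) * α * w ∈ LatticePts ω₁ ω₂}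

/-- The transcendence degree over `ℚ` of the subfield `ℚ(S)` of `ℂ` generated by `S` is
at least `d`: there are `d` algebraically independent elements in `ℚ(S)`. -/
def trdegGe (S : Set ℂ) (d : ℕ) : Prop :=
  ∃ x : Fin d → ℂ, (∀ i, x i ∈ IntermediateField.adjoin ℚ S) ∧ AlgebraicIndependent ℚ x

/-! ### Taylor series as formal power series -/

/-- The Taylor series at `a` of a function `f : ℂ → ℂ`, as a formal power series. It is meaningful
when `f` is analytic at `a`. -/
def tay (a : ℂ) (f : ℂ → ℂ) : PowerSeries ℂ :=
  PowerSeries.mk fun n => iteratedDeriv n f a / (n.factorial : ℂ)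

lemma coeff_tay (a : ℂ) (f : ℂ → ℂ) (n : ℕ) :
    PowerSeries.coeff n (tay a f) = iteratedDeriv n f a / (n.factorial : ℂ) := by
  simp [tay]

lemma coeff_zero_tay (a : ℂ) (f : ℂ → ℂ) : PowerSeries.coeff 0 (tay a f) = f a := by
  simp [coeff_tay]

lemma tay_congr {a : ℂ} {f g : ℂ → ℂ} (h : f =ᶠ[nhds a] g) : tay a f = tay a g := by
  ext n; rw [coeff_tay, coeff_tay, h.iteratedDeriv_eq n]

lemma tay_mul {a : ℂ} {f g : ℂ → ℂ} (hf : AnalyticAt ℂ f a) (hg : AnalyticAt ℂ g a) :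
    tay a (fun z => f z * g z) = tay a f * tay a g := by
  ext n
  rw [PowerSeries.coeff_mul, coeff_tay, iteratedDeriv_fun_mul hf.contDiffAt hg.contDiffAt,
    Finset.Nat.sum_antidiagonal_eq_sum_range_succ_mk, Finset.sum_div]
  refine Finset.sum_congr rfl fun i hi => ?_
  have hi' : i ≤ n := Nat.lt_succ_iff.mp (Finset.mem_range.mp hi)
  rw [coeff_tay, coeff_tay, Nat.cast_choose ℂ hi']
  have h1 : (n.factorial : ℂ) ≠ 0 := by exact_mod_cast n.factorial_ne_zero
  have h2 : (i.factorial : ℂ) ≠ 0 := by exact_mod_cast i.factorial_ne_zero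
  have h3 : ((n - i).factorial : ℂ) ≠ 0 := by exact_mod_cast (n - i).factorial_ne_zero
  field_simp

lemma tay_const (a c : ℂ) : tay a (fun _ => c) = PowerSeries.C c := by
  ext n
  rw [coeff_tay, iteratedDeriv_const, PowerSeries.coeff_C]
  split_ifs with h <;> simp [h]

lemma tay_const_mul {a : ℂ} {f : ℂ → ℂ} (c : ℂ) (hf : AnalyticAt ℂ f a) :
    tay a (fun z => c * f z) = PowerSeries.C c * tay a f := by
  rw [tay_mul analyticAt_const hf, tay_const]

lemma tay_pow {a : ℂ} {f : ℂ → ℂ} (hf : AnalyticAt ℂ f a) (n : ℕ) :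
    tay a (fun z => f z ^ n) = tay a f ^ n := by
  induction n with
  | zero => simpa using tay_const a 1
  | succ n ih =>
    simp only [pow_succ]
    rw [tay_mul (hf.fun_pow n) hf, ih]

lemma tay_add {a : ℂ} {f g : ℂ → ℂ} (hf : AnalyticAt ℂ f a) (hg : AnalyticAt ℂ g a) :
    tay a (fun z => f z + g z) = tay a f + tay a g := by
  ext n
  rw [map_add, coeff_tay, coeff_tay, coeff_tay,
    iteratedDeriv_fun_add hf.contDiffAt hg.contDiffAt, add_div]

lemma tay_sum {ι : Type*} (s : Finset ι) {a : ℂ} {f : ι → ℂ → ℂ}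
    (hf : ∀ i ∈ s, AnalyticAt ℂ (f i) a) :
    tay a (fun z => ∑ i ∈ s, f i z) = ∑ i ∈ s, tay a (f i) := by
  ext n
  rw [map_sum, coeff_tay, iteratedDeriv_fun_sum (fun i hi => (hf i hi).contDiffAt),
    Finset.sum_div]
  exact Finset.sum_congr rfl fun i _ => (coeff_tay _ _ _).symm

lemma tay_sub_const (a b : ℂ) :
    tay a (fun z => z - b) = PowerSeries.C (a - b) + PowerSeries.X := by
  ext n
  rw [coeff_tay]
  match n with
  | 0 => simp
  | 1 => simp [iteratedDeriv_one, PowerSeries.coeff_C]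
  | n + 2 =>
    have : deriv (fun z : ℂ => z - b) = fun _ => 1 := by ext z; simp
    rw [iteratedDeriv_succ', this, iteratedDeriv_const]
    simp [PowerSeries.coeff_C, PowerSeries.coeff_X]

lemma tay_id (a : ℂ) : tay a (fun z => z) = PowerSeries.C a + PowerSeries.X := by
  simpa using tay_sub_const a 0

/-- An entire function with vanishing Taylor series is zero. -/
lemma eq_zero_of_tay_eq_zero {f : ℂ → ℂ} (hf : Differentiable ℂ f) (a : ℂ)
    (h : tay a f = 0) (z : ℂ) : f z = 0 := by
  rw [← Complex.taylorSeries_eq_of_entire' a z hf]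
  have : ∀ n, iteratedDeriv n f a = 0 := fun n => by
    have := coeff_tay a f n
    rw [h] at this
    have h1 : (n.factorial : ℂ) ≠ 0 := by exact_mod_cast n.factorial_ne_zero
    simpa [h1, eq_comm] using this
  simp [this]

lemma exists_eq_sub_mul {f : ℂ → ℂ} (hf : Differentiable ℂ f) {a : ℂ} (h : f a = 0) :
    ∃ g : ℂ → ℂ, Differentiable ℂ g ∧ ∀ z, f z = (z - a) * g z := by
  refine ⟨dslope f a, ?_, fun z => ?_⟩
  · rw [← differentiableOn_univ]
    exact (Complex.differentiableOn_dslope Filter.univ_mem).2 hf.differentiableOn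
  · have := sub_smul_dslope f a z
    rw [h, sub_zero, smul_eq_mul] at this
    exact this.symm

/-- Dividing an entire function by its zero of order `t` at `a` does not affect the orders of
vanishing elsewhere. -/
lemma exists_eq_sub_pow_mul (t : ℕ) {f : ℂ → ℂ} (hf : Differentiable ℂ f) {a : ℂ}
    (h : (PowerSeries.X : PowerSeries ℂ) ^ t ∣ tay a f) :
    ∃ g : ℂ → ℂ, Differentiable ℂ g ∧ (∀ z, f z = (z - a) ^ t * g z) ∧
      ∀ b, b ≠ a → ∀ s, (PowerSeries.X : PowerSeries ℂ) ^ s ∣ tay b f →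
        (PowerSeries.X : PowerSeries ℂ) ^ s ∣ tay b g := by
  induction t generalizing f with
  | zero => exact ⟨f, hf, by simp, fun b _ s hs => hs⟩
  | succ t ih =>
    have h0 : f a = 0 := by
      have := PowerSeries.X_pow_dvd_iff.1 h 0 (Nat.succ_pos t)
      rwa [coeff_zero_tay] at this
    obtain ⟨f₁, hf₁, hff⟩ := exists_eq_sub_mul hf h0
    have key : ∀ b, tay b f = (PowerSeries.C (b - a) + PowerSeries.X) * tay b f₁ := by
      intro b
      rw [← tay_sub_const, ← tay_mul (by fun_prop) (hf₁.analyticAt b)]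
      congr 1; ext z; exact hff z
    have h1 : (PowerSeries.X : PowerSeries ℂ) ^ t ∣ tay a f₁ := by
      rw [key a, sub_self, map_zero, zero_add, pow_succ'] at h
      exact (mul_dvd_mul_iff_left PowerSeries.X_ne_zero).1 h
    obtain ⟨g, hg, hg1, hg2⟩ := ih hf₁ h1
    refine ⟨g, hg, fun z => by rw [hff, hg1]; ring, fun b hb s hs => hg2 b hb s ?_⟩
    rw [key b] at hs
    refine (IsUnit.dvd_mul_left ?_).1 hs
    rw [PowerSeries.isUnit_iff_constantCoeff]
    simpa using sub_ne_zero.2 hb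

/-- An entire function vanishing to order `t` at finitely many distinct points is divisible by the
corresponding product. -/
lemma exists_eq_prod_pow_mul {ι : Type*} (s : Finset ι) (t : ℕ) (z : ι → ℂ)
    (hz : Function.Injective z) {f : ℂ → ℂ} (hf : Differentiable ℂ f)
    (h : ∀ k ∈ s, (PowerSeries.X : PowerSeries ℂ) ^ t ∣ tay (z k) f) :
    ∃ g : ℂ → ℂ, Differentiable ℂ g ∧ ∀ w, f w = (∏ k ∈ s, (w - z k) ^ t) * g w := by
  classical
  induction s using Finset.induction_on generalizing f with
  | empty => exact ⟨f, hf, by simp⟩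
  | insert k s hk ih =>
    obtain ⟨f₁, hf₁, h1, h2⟩ := exists_eq_sub_pow_mul t hf (h k (by simp))
    obtain ⟨g, hg, hg1⟩ := ih hf₁ (fun j hj => h2 _ (fun e => hk (hz e ▸ hj)) _ (h j (by simp [hj])))
    exact ⟨g, hg, fun w => by rw [h1, hg1, Finset.prod_insert hk]; ring⟩

/-! ### Denominators and conjugates of Taylor coefficients over a number field -/

section House

variable {K : Type*} [Field K] [NumberField K]

open NumberField in
lemma house_one' : house (1 : K) = 1 := by
  have := house_intCast (K := K) 1
  simpa using this

open NumberField in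
lemma house_zero' : house (0 : K) = 0 := by
  have := house_intCast (K := K) 0
  simpa using this

open NumberField in
lemma house_neg' (x : K) : house (-x) = house x := by
  simp [house]

/-- The derivatives `t! cₜ` of the power series `∑ cₜ Xᵗ` become algebraic integers after
multiplication by `δ ^ (t + e)`. -/
def HInt (δ e : ℕ) (f : PowerSeries K) : Prop :=
  ∀ t, IsIntegral ℤ ((δ : K) ^ (t + e) * ((t.factorial : K) * PowerSeries.coeff t f))

omit [NumberField K] in
lemma isIntegral_natCast' (n : ℕ) : IsIntegral ℤ (n : K) := by
  have : IsIntegral ℤ ((n : ℤ) : K) := isIntegral_algebraMap (R := ℤ) (A := K) (x := (n : ℤ))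
  simpa using this

lemma HInt.mul {δ e e' : ℕ} {f g : PowerSeries K} (hf : HInt δ e f) (hg : HInt δ e' g) :
    HInt δ (e + e') (f * g) := by
  intro t
  rw [PowerSeries.coeff_mul, Finset.mul_sum, Finset.mul_sum]
  refine IsIntegral.sum _ fun p hp => ?_
  obtain rfl := Finset.HasAntidiagonal.mem_antidiagonal.1 hp
  have h := ((isIntegral_natCast' (K := K) ((p.1 + p.2).choose p.2)).mul (hf p.1)).mul (hg p.2)
  convert h using 1
  have h1 : ((p.1 + p.2).factorial : K) =
      ((p.1 + p.2).choose p.2 : K) * (p.1.factorial : K) * (p.2.factorial : K) := by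
    exact_mod_cast (Nat.add_choose_mul_factorial_mul_factorial p.1 p.2).symm
  rw [h1]; ring

omit [NumberField K] in
lemma hInt_one (δ : ℕ) : HInt δ 0 (1 : PowerSeries K) := by
  intro t
  rw [PowerSeries.coeff_one]
  split_ifs with h
  · subst h; simpa using isIntegral_one
  · simpa using isIntegral_zero

lemma HInt.pow {δ e : ℕ} {f : PowerSeries K} (hf : HInt δ e f) (n : ℕ) :
    HInt δ (n * e) (f ^ n) := by
  induction n with
  | zero => simpa using hInt_one δ
  | succ n ih => rw [pow_succ, Nat.succ_mul]; exact ih.mul hf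

omit [NumberField K] in
lemma hInt_linear {δ : ℕ} {z : K} (h : IsIntegral ℤ ((δ : K) * z)) :
    HInt δ 1 (PowerSeries.C z + PowerSeries.X) := by
  intro t
  match t with
  | 0 => simpa using h
  | 1 =>
    have : IsIntegral ℤ ((δ : K) ^ 2) := (isIntegral_natCast' δ).pow 2
    simpa [PowerSeries.coeff_C] using this
  | t + 2 => simpa [PowerSeries.coeff_C, PowerSeries.coeff_X] using isIntegral_zero

omit [NumberField K] in
lemma coeff_ode {f : PowerSeries K} {h : K}
    (ode : PowerSeries.derivative K (PowerSeries.derivative K f) = 6 * f ^ 2 - PowerSeries.C h)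
    (t : ℕ) : ((t + 2 : ℕ) : K) * (((t + 1 : ℕ) : K) * PowerSeries.coeff (t + 2) f) =
      6 * (∑ p ∈ Finset.HasAntidiagonal.antidiagonal t, PowerSeries.coeff p.1 f * PowerSeries.coeff p.2 f) -
        if t = 0 then h else 0 := by
  have := congrArg (PowerSeries.coeff t) ode
  rw [PowerSeries.coeff_derivative, PowerSeries.coeff_derivative, map_sub,
    PowerSeries.coeff_C, sq, ← map_ofNat PowerSeries.C 6,
    PowerSeries.coeff_C_mul, PowerSeries.coeff_mul] at this
  rw [← this]
  push_cast
  ring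

/-- The equation `f'' = 6 f² - h` with initial values in `δ⁻¹ 𝓞 K` controls all denominators. -/
lemma hInt_ode {f : PowerSeries K} {h : K} {δ : ℕ}
    (ode : PowerSeries.derivative K (PowerSeries.derivative K f) = 6 * f ^ 2 - PowerSeries.C h)
    (h0 : IsIntegral ℤ ((δ : K) * PowerSeries.coeff 0 f))
    (h1 : IsIntegral ℤ ((δ : K) * PowerSeries.coeff 1 f))
    (hh : IsIntegral ℤ ((δ : K) * h)) : HInt δ 1 f := by
  intro t
  induction t using Nat.strong_induction_on with
  | _ t ih =>
    match t with
    | 0 => simpa using h0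
    | 1 =>
      have e : (δ : K) ^ (1 + 1) * ((Nat.factorial 1 : K) * PowerSeries.coeff 1 f) =
          (δ : K) * ((δ : K) * PowerSeries.coeff 1 f) := by
        rw [Nat.factorial_one]; push_cast; ring
      rw [e]
      exact (isIntegral_natCast' δ).mul h1
    | t + 2 =>
      have e := coeff_ode ode t
      have : (δ : K) ^ (t + 2 + 1) * (((t + 2).factorial : K) * PowerSeries.coeff (t + 2) f) =
          (δ : K) ^ (t + 3) * (t.factorial : K) * (6 * (∑ p ∈ Finset.HasAntidiagonal.antidiagonal t,
            PowerSeries.coeff p.1 f * PowerSeries.coeff p.2 f) - if t = 0 then h else 0) := by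
        rw [← e, Nat.factorial_succ, Nat.factorial_succ]; push_cast; ring
      rw [this, mul_sub, Finset.mul_sum, Finset.mul_sum]
      refine IsIntegral.sub (IsIntegral.sum _ fun p hp => ?_) ?_
      · have hp' := Finset.HasAntidiagonal.mem_antidiagonal.1 hp
        have := (((isIntegral_natCast' (K := K) (6 * δ)).mul
          (isIntegral_natCast' (K := K) ((p.1 + p.2).choose p.2))).mul
          (ih p.1 (by omega))).mul (ih p.2 (by omega))
        convert this using 1
        have h1 : ((p.1 + p.2).factorial : K) =
            ((p.1 + p.2).choose p.2 : K) * (p.1.factorial : K) * (p.2.factorial : K) := by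
          exact_mod_cast (Nat.add_choose_mul_factorial_mul_factorial p.1 p.2).symm
        rw [← hp', h1]; push_cast; ring
      · split_ifs with ht
        · subst ht
          have := ((isIntegral_natCast' (K := K) δ).pow 2).mul hh
          convert this using 1
          simp; ring
        · simpa using isIntegral_zero

open NumberField

/-- The weighted `ℓ¹`-norm, with weight `ρ`, of the houses of the coefficients is at most `A`. -/
def HBd (ρ A : ℝ) (f : PowerSeries K) : Prop :=
  ∀ N, ∑ t ∈ Finset.range N, house (PowerSeries.coeff t f) * ρ ^ t ≤ A

lemma HBd.nonneg {ρ A : ℝ} {f : PowerSeries K} (hf : HBd ρ A f) : 0 ≤ A := by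
  simpa using hf 0

lemma HBd.mul {ρ A A' : ℝ} (hρ : 0 ≤ ρ) {f g : PowerSeries K} (hf : HBd ρ A f)
    (hg : HBd ρ A' g) : HBd ρ (A * A') (f * g) := by
  intro N
  have hnn : ∀ (f : PowerSeries K) t, 0 ≤ house (PowerSeries.coeff t f) * ρ ^ t := fun f t =>
    mul_nonneg (house_nonneg _) (pow_nonneg hρ _)
  calc ∑ t ∈ Finset.range N, house (PowerSeries.coeff t (f * g)) * ρ ^ t
      ≤ ∑ t ∈ Finset.range N, ∑ p ∈ Finset.HasAntidiagonal.antidiagonal t,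
          (house (PowerSeries.coeff p.1 f) * ρ ^ p.1) *
            (house (PowerSeries.coeff p.2 g) * ρ ^ p.2) := by
        refine Finset.sum_le_sum fun t _ => ?_
        rw [PowerSeries.coeff_mul]
        refine (mul_le_mul_of_nonneg_right (house_sum_le_sum_house _ _)
          (pow_nonneg hρ _)).trans ?_
        rw [Finset.sum_mul]
        refine Finset.sum_le_sum fun p hp => ?_
        rw [← Finset.HasAntidiagonal.mem_antidiagonal.1 hp, pow_add]
        calc _ ≤ (house (PowerSeries.coeff p.1 f) * house (PowerSeries.coeff p.2 g)) *
              (ρ ^ p.1 * ρ ^ p.2) := by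
              gcongr; exact house_mul_le _ _
          _ = _ := by ring
    _ ≤ ∑ p ∈ Finset.range N ×ˢ Finset.range N,
          (house (PowerSeries.coeff p.1 f) * ρ ^ p.1) *
            (house (PowerSeries.coeff p.2 g) * ρ ^ p.2) := by
        rw [← Finset.sum_biUnion]
        · refine Finset.sum_le_sum_of_subset_of_nonneg ?_
            fun p _ _ => mul_nonneg (hnn f _) (hnn g _)
          intro p hp
          simp only [Finset.mem_biUnion, Finset.mem_range, Finset.HasAntidiagonal.mem_antidiagonal] at hp
          obtain ⟨t, ht, hp⟩ := hp
          simp only [Finset.mem_product, Finset.mem_range]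
          omega
        · intro a _ b _ hab
          rw [Function.onFun, Finset.disjoint_left]
          intro p hp hp'
          exact hab ((Finset.HasAntidiagonal.mem_antidiagonal.1 hp).symm.trans (Finset.HasAntidiagonal.mem_antidiagonal.1 hp'))
    _ = (∑ t ∈ Finset.range N, house (PowerSeries.coeff t f) * ρ ^ t) *
          ∑ t ∈ Finset.range N, house (PowerSeries.coeff t g) * ρ ^ t := by
        rw [Finset.sum_mul_sum, Finset.sum_product]
    _ ≤ A * A' := mul_le_mul (hf N) (hg N) (Finset.sum_nonneg fun t _ => hnn g t) hf.nonneg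

lemma hBd_one {ρ : ℝ} : HBd ρ 1 (1 : PowerSeries K) := by
  intro N
  calc _ ≤ ∑ t ∈ Finset.range N, if t = 0 then (1 : ℝ) else 0 := by
        refine Finset.sum_le_sum fun t _ => ?_
        rw [PowerSeries.coeff_one]
        split_ifs with h
        · simp [h, house_one']
        · simp [house_zero']
    _ ≤ 1 := by
        rw [Finset.sum_ite_eq']
        split_ifs <;> norm_num

lemma HBd.pow {ρ A : ℝ} (hρ : 0 ≤ ρ) {f : PowerSeries K} (hf : HBd ρ A f) (n : ℕ) :
    HBd ρ (A ^ n) (f ^ n) := by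
  induction n with
  | zero => simpa using hBd_one
  | succ n ih => rw [pow_succ, pow_succ]; exact ih.mul hρ hf

lemma HBd.mono {ρ A A' : ℝ} {f : PowerSeries K} (hf : HBd ρ A f) (h : A ≤ A') : HBd ρ A' f :=
  fun N => (hf N).trans h

lemma HBd.anti {ρ ρ' A : ℝ} {f : PowerSeries K} (hf : HBd ρ A f) (hρ : 0 ≤ ρ') (h : ρ' ≤ ρ) :
    HBd ρ' A f := by
  refine fun N => (Finset.sum_le_sum fun t _ => ?_).trans (hf N)
  have := house_nonneg (PowerSeries.coeff t f)
  gcongr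

lemma hBd_linear {ρ : ℝ} (hρ : 0 ≤ ρ) (z : K) :
    HBd ρ (house z + ρ) (PowerSeries.C z + PowerSeries.X) := by
  have h0 := house_nonneg z
  intro N
  match N with
  | 0 => simp; linarith
  | 1 => simp; linarith
  | N + 2 =>
    rw [Finset.sum_range_succ', Finset.sum_range_succ', Finset.sum_eq_zero]
    · simp [house_one', add_comm]
    · intro t _
      simp [PowerSeries.coeff_X, house_zero']

lemma HBd.coeff_le {ρ A : ℝ} (hρ : 0 < ρ) {f : PowerSeries K} (hf : HBd ρ A f) (t : ℕ) :
    house (PowerSeries.coeff t f) ≤ A * (ρ⁻¹) ^ t := by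
  have h := hf (t + 1)
  have hle : house (PowerSeries.coeff t f) * ρ ^ t ≤ A :=
    (Finset.single_le_sum (f := fun t => house (PowerSeries.coeff t f) * ρ ^ t)
      (fun t _ => mul_nonneg (house_nonneg _) (pow_nonneg hρ.le _))
      (Finset.self_mem_range_succ t)).trans h
  rw [inv_pow, ← div_eq_mul_inv, le_div_iff₀ (pow_pos hρ t)]
  exact hle

/-- Power series solutions of `f'' = 6 f² - h` over `K` have geometrically bounded
coefficients at every place at infinity. -/
lemma exists_hBd_ode {f : PowerSeries K} {h : K}
    (ode : PowerSeries.derivative K (PowerSeries.derivative K f) = 6 * f ^ 2 - PowerSeries.C h) :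
    ∃ ρ A : ℝ, 0 < ρ ∧ HBd ρ A f := by
  set c : ℕ → ℝ := fun t => house (PowerSeries.coeff t f) with hc
  set A : ℝ := 1 + c 0 + c 1 with hA
  have hc0 : ∀ t, 0 ≤ c t := fun t => house_nonneg _
  have hh0 := house_nonneg h
  have hA1 : 1 ≤ A := by have := hc0 0; have := hc0 1; linarith
  set B : ℝ := 6 * A + house h with hB
  have hB1 : 1 ≤ B := by linarith
  have key : ∀ t, c t ≤ A * B ^ t := by
    intro t
    induction t using Nat.strong_induction_on with
    | _ t ih =>
      match t with
      | 0 => have := hc0 1; simp; linarith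
      | 1 => have := hc0 0; have : c 1 ≤ A := by linarith
             simp; nlinarith
      | t + 2 =>
        have e := congrArg house (coeff_ode ode t)
        rw [house_nat_mul, house_nat_mul] at e
        have h1 : house (6 * (∑ p ∈ Finset.HasAntidiagonal.antidiagonal t,
            PowerSeries.coeff p.1 f * PowerSeries.coeff p.2 f) - if t = 0 then h else 0) ≤
            6 * ((t + 1 : ℕ) * (A ^ 2 * B ^ t)) + house h := by
          rw [sub_eq_add_neg]
          refine (house_add_le _ _).trans (add_le_add ?_ ?_)
          · rw [show (6 : K) = ((6 : ℕ) : K) by norm_num, house_nat_mul]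
            push_cast
            gcongr
            refine (house_sum_le_sum_house _ _).trans ?_
            calc _ ≤ ∑ p ∈ Finset.HasAntidiagonal.antidiagonal t, A ^ 2 * B ^ t := by
                  refine Finset.sum_le_sum fun p hp => ?_
                  have hp' := Finset.HasAntidiagonal.mem_antidiagonal.1 hp
                  refine (house_mul_le _ _).trans ?_
                  calc _ ≤ (A * B ^ p.1) * (A * B ^ p.2) :=
                        mul_le_mul (ih _ (by omega)) (ih _ (by omega)) (hc0 _) (by positivity)
                    _ = _ := by rw [← hp', pow_add]; ring
              _ = _ := by simp
          · rw [house_neg']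
            split_ifs
            · exact le_rfl
            · rw [house_zero']; exact hh0
        rw [← e] at h1
        change ((t + 2 : ℕ) : ℝ) * (((t + 1 : ℕ) : ℝ) * c (t + 2)) ≤ _ at h1
        have hBt : 1 ≤ B ^ t := one_le_pow₀ hB1
        have h2 : ((t + 1 : ℕ) : ℝ) * c (t + 2) ≤
            ((t + 2 : ℕ) : ℝ) * (((t + 1 : ℕ) : ℝ) * c (t + 2)) := by
          refine le_mul_of_one_le_left (mul_nonneg (by positivity) (hc0 _)) ?_
          push_cast; linarith [(Nat.cast_nonneg t : (0 : ℝ) ≤ t)]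
        have h3 : house h ≤ ((t + 1 : ℕ) : ℝ) * (house h * (A * B ^ t)) := by
          have : 1 ≤ A * B ^ t := by nlinarith
          have : house h ≤ house h * (A * B ^ t) := le_mul_of_one_le_right hh0 this
          refine this.trans (le_mul_of_one_le_left (by positivity) ?_)
          push_cast; linarith [(Nat.cast_nonneg t : (0 : ℝ) ≤ t)]
        have h4 : ((t + 1 : ℕ) : ℝ) * c (t + 2) ≤ ((t + 1 : ℕ) : ℝ) * (A * B ^ t * B) := by
          calc _ ≤ _ := h2.trans h1
            _ ≤ 6 * ((t + 1 : ℕ) * (A ^ 2 * B ^ t)) +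
              ((t + 1 : ℕ) : ℝ) * (house h * (A * B ^ t)) := by linarith
            _ = _ := by rw [hB]; ring
        have h5 := le_of_mul_le_mul_left h4 (by positivity)
        refine h5.trans ?_
        have : A * B ^ (t + 2) = A * B ^ t * B * B := by ring
        rw [this]
        exact le_mul_of_one_le_right (by positivity) hB1
  refine ⟨(2 * B)⁻¹, A * 2, by positivity, fun N => ?_⟩
  calc ∑ t ∈ Finset.range N, c t * (2 * B)⁻¹ ^ t
      ≤ ∑ t ∈ Finset.range N, A * (1 / 2 : ℝ) ^ t := by
        refine Finset.sum_le_sum fun t _ => ?_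
        have hBt : 0 < B ^ t := by positivity
        calc c t * (2 * B)⁻¹ ^ t ≤ A * B ^ t * (2 * B)⁻¹ ^ t := by
              gcongr; exact key t
          _ = _ := by rw [inv_pow, mul_pow, one_div, inv_pow]; field_simp
    _ ≤ A * 2 := by
        rw [← Finset.mul_sum]
        gcongr
        exact sum_geometric_two_le N

end House

/-! ### Siegel's lemma, Liouville's inequality and Schwarz's lemma -/

section Siegel

variable {K : Type*} [Field K] [NumberField K]

open NumberField

/-- Siegel's lemma over the ring of integers of `K`, for twice as many unknowns as equations. -/
lemma siegel_two (K : Type*) [Field K] [NumberField K] :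
    ∃ c : ℝ, 1 ≤ c ∧ ∀ (α β : Type) [Fintype α] [Fintype β], 0 < Fintype.card α →
      Fintype.card β = 2 * Fintype.card α → ∀ (a : Matrix α β (𝓞 K)) (A : ℝ), 1 ≤ A →
      (∀ k l, house (algebraMap (𝓞 K) K (a k l)) ≤ A) →
      ∃ ξ : β → 𝓞 K, ξ ≠ 0 ∧ a.mulVec ξ = 0 ∧
        ∀ l, house (ξ l : K) ≤ c * (Fintype.card β : ℝ) * A := by
  classical
  have h : ∃ c : ℝ, ∀ (α β : Type) [Fintype α] [Fintype β], 0 < Fintype.card α →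
      Fintype.card β = 2 * Fintype.card α → ∀ (a : Matrix α β (𝓞 K)), a ≠ 0 → ∀ (A : ℝ),
      (∀ k l, house (algebraMap (𝓞 K) K (a k l)) ≤ A) →
      ∃ ξ : β → 𝓞 K, ξ ≠ 0 ∧ a.mulVec ξ = 0 ∧
        ∀ l, house (ξ l : K) ≤ c * ((c * (Fintype.card β : ℝ) * A) ^
          ((Fintype.card α : ℝ) / ((Fintype.card β : ℝ) - (Fintype.card α : ℝ)))) :=
    ⟨_, fun α β _ _ hp hq a ha A hA =>
      NumberField.house.exists_ne_zero_int_vec_house_le K a ha hp (by omega) rfl hA rfl⟩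
  obtain ⟨c, hc⟩ := h
  refine ⟨max 1 (c ^ 2), le_max_left _ _, fun α β _ _ hp hq a A hA hb => ?_⟩
  have hβ : 0 < Fintype.card β := by omega
  have hβ' : (1 : ℝ) ≤ Fintype.card β := by exact_mod_cast hβ
  by_cases ha : a = 0
  · have : Nonempty β := Fintype.card_pos_iff.1 hβ
    refine ⟨fun _ => 1, ?_, ?_, fun l => ?_⟩
    · intro h; simpa using congrFun h (Classical.arbitrary β)
    · rw [ha, Matrix.zero_mulVec]
    · have : house ((1 : 𝓞 K) : K) = 1 := by simpa using house_one' (K := K)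
      rw [this]
      have h1 : 1 ≤ max 1 (c ^ 2) := le_max_left _ _
      nlinarith [mul_le_mul h1 hβ' zero_le_one (by linarith)]
  · obtain ⟨ξ, h1, h2, h3⟩ := hc α β hp hq a ha A hb
    refine ⟨ξ, h1, h2, fun l => (h3 l).trans ?_⟩
    have hp' : (Fintype.card α : ℝ) ≠ 0 := by exact_mod_cast hp.ne'
    have : (Fintype.card α : ℝ) / ((Fintype.card β : ℝ) - (Fintype.card α : ℝ)) = 1 := by
      rw [hq]; push_cast
      rw [div_eq_one_iff_eq]
      · ring
      · intro h; apply hp'; linarith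
    rw [this, Real.rpow_one]
    have h4 : c ^ 2 ≤ max 1 (c ^ 2) := le_max_right _ _
    have h5 : 0 ≤ (Fintype.card β : ℝ) * A := by positivity
    nlinarith

/-- Liouville's inequality: a nonzero algebraic integer is not too small at any place. -/
lemma liouville_ineq (φ : K →+* ℂ) {x : K} (hx : IsIntegral ℤ x) (h0 : x ≠ 0) :
    1 ≤ ‖φ x‖ * house x ^ (Module.finrank ℚ K - 1) := by
  refine le_trans ?_ (norm_norm_le_norm_mul_house_pow x φ)
  have h1 : IsIntegral ℤ (Algebra.norm ℚ x) := Algebra.isIntegral_norm ℚ hx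
  obtain ⟨y, hy⟩ := IsIntegrallyClosed.isIntegral_iff.1 h1
  have h2 : Algebra.norm ℚ x ≠ 0 := Algebra.norm_ne_zero_iff.2 h0
  rw [← hy] at h2 ⊢
  have h3 : y ≠ 0 := by rintro rfl; simp at h2
  have h4 : (1 : ℤ) ≤ |y| := Int.one_le_abs h3
  have : ‖algebraMap ℤ ℚ y‖ = ((|y| : ℤ) : ℝ) := by
    simp [← Rat.norm_cast_real]
  rw [this]
  exact_mod_cast h4

/-- A common denominator for finitely many elements of `K`. -/
lemma exists_denom (s : Finset K) :
    ∃ δ : ℕ, 1 ≤ δ ∧ ∀ x ∈ s, IsIntegral ℤ ((δ : K) * x) := by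
  classical
  induction s using Finset.induction_on with
  | empty => exact ⟨1, le_rfl, by simp⟩
  | insert x s _ ih =>
    obtain ⟨δ, h1, h2⟩ := ih
    have hx : IsAlgebraic ℤ x :=
      (IsFractionRing.isAlgebraic_iff ℤ ℚ K).2 (Algebra.IsAlgebraic.isAlgebraic x)
    obtain ⟨y, hy0, hy⟩ := hx.exists_integral_multiple
    have hy' : IsIntegral ℤ ((y.natAbs : K) * x) := by
      rw [zsmul_eq_mul] at hy
      rcases Int.natAbs_eq y with h | h
      · rw [h] at hy; simpa using hy
      · rw [h] at hy; simpa using hy.neg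
    refine ⟨δ * y.natAbs, Nat.mul_pos h1 (Int.natAbs_pos.2 hy0), fun w hw => ?_⟩
    rcases Finset.mem_insert.1 hw with rfl | hw
    · have := (isIntegral_natCast' (K := K) δ).mul hy'
      rw [Nat.cast_mul, mul_assoc]; exact this
    · have := (isIntegral_natCast' (K := K) y.natAbs).mul (h2 w hw)
      rw [Nat.cast_mul, mul_comm (δ : K), mul_assoc]; exact this

/-- Finitely many solutions of the equation, and the expansions of the identity function at the
corresponding points, share a common weight and bound. -/
lemma exists_hBd_uniform (m : ℕ) (z : ℕ → K) (X : ℕ → PowerSeries K) (h : K)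
    (ode : ∀ k, PowerSeries.derivative K (PowerSeries.derivative K (X k)) =
      6 * X k ^ 2 - PowerSeries.C h) :
    ∃ ρ A : ℝ, 0 < ρ ∧ ρ ≤ 1 ∧ 1 ≤ A ∧ ∀ k < m, HBd ρ A (X k) ∧
      HBd ρ A (PowerSeries.C (z k) + PowerSeries.X) := by
  induction m with
  | zero => exact ⟨1, 1, one_pos, le_rfl, le_rfl, by simp⟩
  | succ m ih =>
    obtain ⟨ρ, A, h1, h2, h3, h4⟩ := ih
    obtain ⟨ρ', A', h5, h6⟩ := exists_hBd_ode (ode m)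
    have hA' := h6.nonneg
    have hz := house_nonneg (z m)
    have hr : 0 < min ρ ρ' := lt_min h1 h5
    have hr1 : min ρ ρ' ≤ 1 := (min_le_left _ _).trans h2
    refine ⟨min ρ ρ', A + A' + house (z m) + 1, hr, hr1, by linarith, fun k hk => ?_⟩
    rcases Nat.lt_succ_iff_lt_or_eq.1 hk with hk | rfl
    · exact ⟨((h4 k hk).1.anti hr.le (min_le_left _ _)).mono (by linarith),
        ((h4 k hk).2.anti hr.le (min_le_left _ _)).mono (by linarith)⟩
    · exact ⟨(h6.anti hr.le (min_le_right _ _)).mono (by linarith),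
        (hBd_linear hr.le _).mono (by linarith)⟩

end Siegel

/-- Schwarz's lemma for several zeros of order `t`: the first nonvanishing Taylor coefficient of an
entire function at one of them is small. -/
lemma schwarz_bound (m t : ℕ) (z : ℕ → ℂ) (hz : Function.Injective z) {G : ℂ → ℂ}
    (hG : Differentiable ℂ G)
    (h : ∀ k < m, (PowerSeries.X : PowerSeries ℂ) ^ t ∣ tay (z k) G)
    {R M D : ℝ} (hR : 0 < R) (hM : ∀ w, ‖w‖ = R → ‖G w‖ ≤ M)
    (hzR : ∀ k < m, ‖z k‖ ≤ R / 2) (hD : 1 ≤ D) (hzD : ∀ i < m, ∀ j < m, ‖z i - z j‖ ≤ D)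
    {k₀ : ℕ} (hk₀ : k₀ < m) :
    ‖PowerSeries.coeff t (tay (z k₀) G)‖ ≤ D ^ (m * t) * (M / (R / 2) ^ (m * t)) := by
  obtain ⟨H, hH, hGH⟩ := exists_eq_prod_pow_mul (Finset.range m) t z hz hG
    (fun k hk => h k (Finset.mem_range.1 hk))
  -- The value of the cofactor `H`, by the maximum principle.
  have hH0 : ‖H (z k₀)‖ ≤ M / (R / 2) ^ (m * t) := by
    refine Complex.norm_le_of_forall_mem_frontier_norm_le (U := Metric.ball (0 : ℂ) R)
      Metric.isBounded_ball hH.diffContOnCl ?_ ?_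
    · intro w hw
      rw [frontier_ball _ hR.ne', mem_sphere_zero_iff_norm] at hw
      rw [le_div_iff₀ (by positivity)]
      refine le_trans ?_ (hM w hw)
      rw [hGH, norm_mul, mul_comm]
      gcongr
      rw [norm_prod]
      calc (R / 2) ^ (m * t) = ∏ k ∈ Finset.range m, (R / 2) ^ t := by
            rw [Finset.prod_const, Finset.card_range, ← pow_mul, mul_comm]
        _ ≤ _ := by
            refine Finset.prod_le_prod (fun _ _ => by positivity) fun k hk => ?_
            rw [norm_pow]
            gcongr
            have h1 := hzR k (Finset.mem_range.1 hk)
            have h2 := norm_sub_norm_le w (z k)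
            linarith
    · rw [closure_ball _ hR.ne', mem_closedBall_zero_iff]
      exact (hzR _ hk₀).trans (by linarith)
  have hM0 : 0 ≤ M / (R / 2) ^ (m * t) := (norm_nonneg _).trans hH0
  have key : PowerSeries.coeff t (tay (z k₀) G) =
      (∏ k ∈ (Finset.range m).erase k₀, (z k₀ - z k) ^ t) * H (z k₀) := by
    have e : G = fun w => (w - z k₀) ^ t *
        ((∏ k ∈ (Finset.range m).erase k₀, (w - z k) ^ t) * H w) := by
      ext w
      rw [hGH, ← Finset.mul_prod_erase _ _ (Finset.mem_range.2 hk₀)]; ring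
    have h1 : Differentiable ℂ fun w => (∏ k ∈ (Finset.range m).erase k₀, (w - z k) ^ t) * H w := by
      fun_prop
    have h2 : Differentiable ℂ fun w => w - z k₀ := by fun_prop
    rw [e, tay_mul (by fun_prop) (h1.analyticAt _), tay_pow (h2.analyticAt _), tay_sub_const,
      sub_self, map_zero, zero_add]
    have := PowerSeries.coeff_X_pow_mul
      (tay (z k₀) fun w => (∏ k ∈ (Finset.range m).erase k₀, (w - z k) ^ t) * H w) t 0
    rw [zero_add] at this
    rw [this, coeff_zero_tay]
  rw [key, norm_mul]
  refine mul_le_mul ?_ hH0 (norm_nonneg _) (by positivity)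
  rw [norm_prod]
  calc _ ≤ ∏ k ∈ (Finset.range m).erase k₀, D ^ t := by
        refine Finset.prod_le_prod (fun _ _ => norm_nonneg _) fun k hk => ?_
        rw [norm_pow]
        gcongr
        exact hzD _ hk₀ _ (Finset.mem_range.1 (Finset.mem_of_mem_erase hk))
    _ ≤ _ := by
        rw [Finset.prod_const, ← pow_mul]
        refine pow_le_pow_right₀ hD ?_
        rw [mul_comm]
        refine Nat.mul_le_mul_right _ ?_
        exact (Finset.card_erase_le).trans (by simp)

/-! ### The auxiliary function -/

section Aux

open NumberField

variable {K : Type*} [Field K] [NumberField K]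

omit [NumberField K] in
lemma HInt.raise {δ e e' : ℕ} {f : PowerSeries K} (hf : HInt δ e f) (h : e ≤ e') :
    HInt δ e' f := by
  intro t
  have h1 := ((isIntegral_natCast' (K := K) δ).pow (e' - e)).mul (hf t)
  rwa [← mul_assoc, ← pow_add, show e' - e + (t + e) = t + e' by omega] at h1

/-- The Taylor expansion at `z` of the auxiliary function `∑ ξ i j wⁱ f(w)ʲ`, where `Y` is the
Taylor expansion of `f` at `z`. -/
def auxS (L : ℕ) (ξ : Fin L → Fin L → K) (z : K) (Y : PowerSeries K) : PowerSeries K :=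
  ∑ i : Fin L, ∑ j : Fin L,
    PowerSeries.C (ξ i j) * ((PowerSeries.C z + PowerSeries.X) ^ (i : ℕ) * Y ^ (j : ℕ))

/-- The entire function `σ(w) ^ (2 L) ∑ a i j wⁱ (Q(w) / σ(w) ^ 2)ʲ`. -/
def auxG (L : ℕ) (a : Fin L → Fin L → ℂ) (σ Q : ℂ → ℂ) (w : ℂ) : ℂ :=
  ∑ i : Fin L, ∑ j : Fin L,
    a i j * (w ^ (i : ℕ) * (Q w ^ (j : ℕ) * σ w ^ (2 * (L - (j : ℕ)))))

lemma differentiable_auxG (L : ℕ) (a : Fin L → Fin L → ℂ) {σ Q : ℂ → ℂ}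
    (hσ : Differentiable ℂ σ) (hQ : Differentiable ℂ Q) : Differentiable ℂ (auxG L a σ Q) := by
  unfold auxG; fun_prop

/-- Off the zeros of `σ` the entire function `auxG` is `σ ^ (2 L)` times the polynomial in `w` and
`Q / σ²`. -/
lemma auxG_eq (L : ℕ) (a : Fin L → Fin L → ℂ) {σ Q : ℂ → ℂ} {w : ℂ} (hw : σ w ≠ 0) :
    auxG L a σ Q w = σ w ^ (2 * L) *
      ∑ i : Fin L, ∑ j : Fin L, a i j * w ^ (i : ℕ) * (Q w / σ w ^ 2) ^ (j : ℕ) := by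
  rw [auxG, Finset.mul_sum]
  refine Finset.sum_congr rfl fun i _ => ?_
  rw [Finset.mul_sum]
  refine Finset.sum_congr rfl fun j _ => ?_
  have h : 2 * L = 2 * (L - (j : ℕ)) + 2 * (j : ℕ) := by have := j.2; omega
  rw [h, pow_add, div_pow, ← pow_mul]
  field_simp

omit [NumberField K] in
/-- At a point of `K`, the Taylor series of `auxG` is that of `σ ^ (2 L)` times a power series over
`K`. -/
lemma tay_auxG (φ : K →+* ℂ) (L : ℕ) (ξ : Fin L → Fin L → K) {σ Q : ℂ → ℂ}
    (hσ : Differentiable ℂ σ) (hQ : Differentiable ℂ Q) {z : K} {Y : PowerSeries K}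
    (hz : σ (φ z) ≠ 0)
    (hY : PowerSeries.map φ Y = tay (φ z) fun w => Q w / σ w ^ 2) :
    tay (φ z) (auxG L (fun i j => φ (ξ i j)) σ Q) =
      tay (φ z) σ ^ (2 * L) * PowerSeries.map φ (auxS L ξ z Y) := by
  have hσa := hσ.analyticAt (φ z)
  have hQa := hQ.analyticAt (φ z)
  have hQt : tay (φ z) Q = PowerSeries.map φ Y * tay (φ z) σ ^ 2 := by
    rw [hY, ← tay_pow hσa, ← tay_mul (hQa.fun_div (hσa.fun_pow 2) (pow_ne_zero _ hz))
      (hσa.fun_pow 2)]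
    refine tay_congr ?_
    filter_upwards [hσ.continuous.continuousAt.eventually_ne hz] with w hw
    field_simp
  unfold auxG auxS
  rw [tay_sum _ fun i _ => Differentiable.analyticAt (by fun_prop) _, map_sum, Finset.mul_sum]
  refine Finset.sum_congr rfl fun i _ => ?_
  rw [tay_sum _ fun i _ => Differentiable.analyticAt (by fun_prop) _, map_sum, Finset.mul_sum]
  refine Finset.sum_congr rfl fun j _ => ?_
  have hid : AnalyticAt ℂ (fun w : ℂ => w) (φ z) := analyticAt_id
  rw [tay_const_mul _ (Differentiable.analyticAt (by fun_prop) _),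
    tay_mul (hid.fun_pow _) (Differentiable.analyticAt (by fun_prop) _),
    tay_mul (hQa.fun_pow _) (hσa.fun_pow _), tay_pow hid, tay_pow hQa, tay_pow hσa, hQt, tay_id]
  simp only [map_mul, map_pow, map_add, PowerSeries.map_C, PowerSeries.map_X]
  have h : 2 * L = 2 * (L - (j : ℕ)) + 2 * (j : ℕ) := by have := j.2; omega
  rw [h, pow_add, mul_pow, ← pow_mul]
  ring

lemma coeff_mul_of_dvd {t : ℕ} {P S : PowerSeries ℂ} (h : ∀ s < t, PowerSeries.coeff s S = 0) :
    PowerSeries.coeff t (P * S) = PowerSeries.coeff 0 P * PowerSeries.coeff t S := by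
  obtain ⟨S', rfl⟩ := PowerSeries.X_pow_dvd_iff.2 h
  have h1 := PowerSeries.coeff_X_pow_mul (P * S') t 0
  have h2 := PowerSeries.coeff_X_pow_mul S' t 0
  rw [zero_add] at h1 h2
  rw [h2, show P * (PowerSeries.X ^ t * S') = PowerSeries.X ^ t * (P * S') by ring, h1,
    PowerSeries.coeff_mul]; simp

lemma hInt_auxS {δ L : ℕ} {ξ : Fin L → Fin L → K} {z : K} {Y : PowerSeries K}
    (hξ : ∀ i j, IsIntegral ℤ (ξ i j)) (hz : IsIntegral ℤ ((δ : K) * z)) (hY : HInt δ 1 Y) :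
    HInt δ (2 * L) (auxS L ξ z Y) := by
  intro t
  rw [auxS, map_sum, Finset.mul_sum, Finset.mul_sum]
  refine IsIntegral.sum _ fun i _ => ?_
  rw [map_sum, Finset.mul_sum, Finset.mul_sum]
  refine IsIntegral.sum _ fun j _ => ?_
  have h1 : HInt δ (2 * L)
      ((PowerSeries.C z + PowerSeries.X) ^ (i : ℕ) * Y ^ (j : ℕ)) :=
    (((hInt_linear hz).pow i).mul (hY.pow j)).raise (by have := i.2; have := j.2; omega)
  have h2 := (hξ i j).mul (h1 t)
  rw [PowerSeries.coeff_C_mul]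
  convert h2 using 1
  ring

lemma house_coeff_mono {ρ A : ℝ} (hρ : 0 < ρ) (hA : 1 ≤ A) {L i j : ℕ} (hi : i ≤ L) (hj : j ≤ L)
    {z : K} {Y : PowerSeries K} (hz : HBd ρ A (PowerSeries.C z + PowerSeries.X))
    (hY : HBd ρ A Y) (t : ℕ) :
    house (PowerSeries.coeff t ((PowerSeries.C z + PowerSeries.X) ^ i * Y ^ j)) ≤
      A ^ (2 * L) * (ρ⁻¹) ^ t := by
  refine HBd.coeff_le hρ ?_ t
  refine ((hz.pow hρ.le i).mul hρ.le (hY.pow hρ.le j)).mono ?_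
  rw [← pow_add]
  exact pow_le_pow_right₀ hA (by omega)

lemma house_coeff_auxS {ρ A x : ℝ} (hρ : 0 < ρ) (hA : 1 ≤ A) {L : ℕ} {ξ : Fin L → Fin L → K}
    (hξ : ∀ i j, house (ξ i j) ≤ x)
    {z : K} {Y : PowerSeries K} (hz : HBd ρ A (PowerSeries.C z + PowerSeries.X))
    (hY : HBd ρ A Y) (t : ℕ) :
    house (PowerSeries.coeff t (auxS L ξ z Y)) ≤ L ^ 2 * (x * (A ^ (2 * L) * (ρ⁻¹) ^ t)) := by
  rw [auxS, map_sum]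
  refine (house_sum_le_sum_house _ _).trans ?_
  calc _ ≤ ∑ i : Fin L, ∑ j : Fin L, x * (A ^ (2 * L) * (ρ⁻¹) ^ t) := by
        refine Finset.sum_le_sum fun i _ => ?_
        rw [map_sum]
        refine (house_sum_le_sum_house _ _).trans (Finset.sum_le_sum fun j _ => ?_)
        rw [PowerSeries.coeff_C_mul]
        refine (house_mul_le _ _).trans ?_
        exact mul_le_mul (hξ i j) (house_coeff_mono hρ hA i.2.le j.2.le hz hY t)
          (house_nonneg _) ((house_nonneg _).trans (hξ i j))
    _ = _ := by simp; ring

/-- The growth of the auxiliary function. -/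
lemma norm_auxG_le {L : ℕ} {a : Fin L → Fin L → ℂ} {σ Q : ℂ → ℂ} {w : ℂ} {x C R : ℝ}
    (ha : ∀ i j, ‖a i j‖ ≤ x) (hR : 1 ≤ R) (hw : ‖w‖ = R) (hC : 0 ≤ C)
    (hσ : ‖σ w‖ ≤ Real.exp (C * (1 + ‖w‖) ^ 3)) (hQ : ‖Q w‖ ≤ Real.exp (C * (1 + ‖w‖) ^ 3)) :
    ‖auxG L a σ Q w‖ ≤ L ^ 2 * (x * Real.exp ((2 * C + 1) * (L * (1 + R) ^ 3))) := by
  rw [hw] at hσ hQ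
  set b := Real.exp (C * (1 + R) ^ 3) with hb
  have hb1 : 1 ≤ b := Real.one_le_exp (by positivity)
  have hRe : R ≤ Real.exp ((1 + R) ^ 3) := by
    have h1 := Real.add_one_le_exp ((1 + R) ^ 3)
    nlinarith [sq_nonneg R, mul_nonneg (by linarith : 0 ≤ R) (sq_nonneg R)]
  have hexp : Real.exp ((2 * C + 1) * (L * (1 + R) ^ 3)) = Real.exp ((1 + R) ^ 3) ^ L * b ^ (2 * L) := by
    rw [hb, ← Real.exp_nat_mul, ← Real.exp_nat_mul, ← Real.exp_add]
    congr 1; push_cast; ring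
  rw [hexp, auxG]
  calc _ ≤ ∑ i : Fin L, ∑ j : Fin L, x * (Real.exp ((1 + R) ^ 3) ^ L * b ^ (2 * L)) := by
        refine norm_sum_le_of_le _ fun i _ => norm_sum_le_of_le _ fun j _ => ?_
        rw [norm_mul, norm_mul, norm_mul, norm_pow, norm_pow, norm_pow, hw]
        have h1 : R ^ (i : ℕ) ≤ Real.exp ((1 + R) ^ 3) ^ L :=
          (pow_le_pow_right₀ hR i.2.le).trans (by gcongr)
        have h2 : ‖Q w‖ ^ (j : ℕ) * ‖σ w‖ ^ (2 * (L - (j : ℕ))) ≤ b ^ (2 * L) := by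
          calc _ ≤ b ^ (j : ℕ) * b ^ (2 * (L - (j : ℕ))) := by gcongr
            _ ≤ _ := by
              rw [← pow_add]
              exact pow_le_pow_right₀ hb1 (by have := j.2; omega)
        have h0 : 0 ≤ x := (norm_nonneg _).trans (ha i j)
        have := ha i j
        gcongr
    _ = _ := by simp; ring

end Aux

section Step

open NumberField

/-- Construction of the auxiliary function: `L = 2 m n`, with zeros of order `T = 2 m n²` at `m`
points. -/
lemma exists_aux (K : Type*) [Field K] [NumberField K] :
    ∃ c : ℝ, 1 ≤ c ∧ ∀ (m n δ : ℕ) (ρ A : ℝ) (z : ℕ → K) (Y : ℕ → PowerSeries K),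
      0 < m → 0 < n → 1 ≤ δ → 0 < ρ → ρ ≤ 1 → 1 ≤ A →
      (∀ k < m, HBd ρ A (Y k) ∧ HBd ρ A (PowerSeries.C (z k) + PowerSeries.X)) →
      (∀ k < m, IsIntegral ℤ ((δ : K) * z k)) → (∀ k < m, HInt δ 1 (Y k)) →
      ∀ L T : ℕ, L = 2 * m * n → T = 2 * m * n ^ 2 →
      ∃ ξ : Fin L → Fin L → 𝓞 K, (∃ i j, ξ i j ≠ 0) ∧
        (∀ k < m, ∀ t < T, PowerSeries.coeff t (auxS L (fun i j => (ξ i j : K)) (z k) (Y k)) = 0) ∧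
        ∀ i j, house (ξ i j : K) ≤
          c * (L : ℝ) ^ 2 * (δ ^ (T + 2 * L) * (T.factorial * (A ^ (2 * L) * (ρ⁻¹) ^ T))) := by
  obtain ⟨c, hc1, hc⟩ := siegel_two K
  refine ⟨c, hc1, fun m n δ ρ A z Y hm hn hδ hρ hρ1 hA hB hzi hYi L T hL hT => ?_⟩
  have hentry : ∀ (q : Fin T × Fin m) (b : Fin L × Fin L), IsIntegral ℤ
      ((δ : K) ^ (T + 2 * L) * (((q.1 : ℕ).factorial : K) * PowerSeries.coeff (q.1 : ℕ)
        ((PowerSeries.C (z q.2) + PowerSeries.X) ^ (b.1 : ℕ) * Y q.2 ^ (b.2 : ℕ)))) := by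
    intro q b
    have h1 : HInt δ (T - q.1 + 2 * L)
        ((PowerSeries.C (z q.2) + PowerSeries.X) ^ (b.1 : ℕ) * Y q.2 ^ (b.2 : ℕ)) :=
      (((hInt_linear (hzi _ q.2.2)).pow b.1).mul ((hYi _ q.2.2).pow b.2)).raise
        (by have := b.1.2; have := b.2.2; omega)
    have h2 := h1 q.1
    rwa [show (q.1 : ℕ) + (T - q.1 + 2 * L) = T + 2 * L by have := q.1.2; omega] at h2
  let a : Matrix (Fin T × Fin m) (Fin L × Fin L) (𝓞 K) := fun q b => ⟨_, hentry q b⟩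
  set E : ℝ := δ ^ (T + 2 * L) * (T.factorial * (A ^ (2 * L) * (ρ⁻¹) ^ T)) with hE
  have hδ' : (1 : ℝ) ≤ δ := by exact_mod_cast hδ
  have hρ' : 1 ≤ ρ⁻¹ := (one_le_inv₀ hρ).2 hρ1
  have hE1 : 1 ≤ E := by
    have h1 : (1 : ℝ) ≤ T.factorial := by exact_mod_cast T.factorial_pos
    refine one_le_mul_of_one_le_of_one_le (one_le_pow₀ hδ')
      (one_le_mul_of_one_le_of_one_le h1
      (one_le_mul_of_one_le_of_one_le (one_le_pow₀ hA) (one_le_pow₀ hρ')))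
  have hcard : Fintype.card (Fin L × Fin L) = 2 * Fintype.card (Fin T × Fin m) := by
    simp only [Fintype.card_prod, Fintype.card_fin, hL, hT]; ring
  have hpos : 0 < Fintype.card (Fin T × Fin m) := by
    simp only [Fintype.card_prod, Fintype.card_fin, hT]; positivity
  obtain ⟨x, hx0, hxa, hxb⟩ := hc (Fin T × Fin m) (Fin L × Fin L) hpos hcard a E hE1 (by
    intro q b
    have : algebraMap (𝓞 K) K (a q b) = ((δ ^ (T + 2 * L) : ℕ) : K) *
        (((q.1 : ℕ).factorial : K) * PowerSeries.coeff (q.1 : ℕ)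
        ((PowerSeries.C (z q.2) + PowerSeries.X) ^ (b.1 : ℕ) * Y q.2 ^ (b.2 : ℕ))) := by
      rw [Nat.cast_pow]; rfl
    rw [this, house_nat_mul, house_nat_mul, hE, Nat.cast_pow]
    have h1 := house_coeff_mono hρ hA b.1.2.le b.2.2.le (hB _ q.2.2).2 (hB _ q.2.2).1 (q.1 : ℕ)
    have h2 : (ρ⁻¹) ^ (q.1 : ℕ) ≤ (ρ⁻¹) ^ T := pow_le_pow_right₀ hρ' q.1.2.le
    have h3 : ((q.1 : ℕ).factorial : ℝ) ≤ T.factorial := by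
      exact_mod_cast Nat.factorial_le q.1.2.le
    have h4 := house_nonneg (PowerSeries.coeff (q.1 : ℕ)
        ((PowerSeries.C (z q.2) + PowerSeries.X) ^ (b.1 : ℕ) * Y q.2 ^ (b.2 : ℕ)))
    gcongr
    exact h1.trans (by gcongr))
  refine ⟨fun i j => x (i, j), ?_, ?_, fun i j => ?_⟩
  · obtain ⟨b, hb⟩ := Function.ne_iff.1 hx0
    exact ⟨b.1, b.2, hb⟩
  · intro k hk t ht
    have h1 := congrFun hxa (⟨t, ht⟩, ⟨k, hk⟩)
    have h2 := congrArg (algebraMap (𝓞 K) K) h1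
    rw [Matrix.mulVec, dotProduct, map_sum, Fintype.sum_prod_type] at h2
    have h3 : (δ : K) ^ (T + 2 * L) * ((t.factorial : K) *
        PowerSeries.coeff t (auxS L (fun i j => (x (i, j) : K)) (z k) (Y k))) = 0 := by
      rw [← show _ = (0 : K) from h2.trans (map_zero _), auxS, map_sum, Finset.mul_sum,
        Finset.mul_sum]
      refine Finset.sum_congr rfl fun i _ => ?_
      rw [map_sum, Finset.mul_sum, Finset.mul_sum]
      refine Finset.sum_congr rfl fun j _ => ?_
      rw [PowerSeries.coeff_C_mul, (algebraMap (𝓞 K) K).map_mul]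
      change _ = ((δ : K) ^ (T + 2 * L) * ((t.factorial : K) * PowerSeries.coeff t
        ((PowerSeries.C (z k) + PowerSeries.X) ^ (i : ℕ) * Y k ^ (j : ℕ)))) * _
      ring
    have h4 : (δ : K) ≠ 0 := by exact_mod_cast (by omega : δ ≠ 0)
    have h5 : (t.factorial : K) ≠ 0 := by exact_mod_cast t.factorial_ne_zero
    simpa [h4, h5] using h3
  · refine (hxb (i, j)).trans (le_of_eq ?_)
    simp only [Fintype.card_prod, Fintype.card_fin, Nat.cast_mul]; rw [hE, sq]

end Step

/-! ### Schneider's argument -/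

section Core

open NumberField

/-- The estimates at order `T ≤ t` are at most exponential in `t`, except for the factorial, because
`L² ≤ 2 m t`. -/
lemma num_bound {m L t T : ℕ} {c δ A r : ℝ} (ht : 1 ≤ t) (hm : 1 ≤ m) (hT : T ≤ t) (hLt : L ≤ t)
    (hL : L ^ 2 ≤ 2 * m * t) (hc : 1 ≤ c) (hδ : 1 ≤ δ) (hA : 1 ≤ A) (hr : 1 ≤ r) :
    c * (L : ℝ) ^ 2 * (δ ^ (T + 2 * L) * (T.factorial * (A ^ (2 * L) * r ^ T))) ≤
      (c * (2 * m) * 2 * δ ^ 3 * A ^ 2 * r) ^ t * (t : ℝ) ^ t := by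
  have h1 : (L : ℝ) ^ 2 ≤ (2 * m) ^ t * 2 ^ t := by
    have h2 : (L : ℝ) ^ 2 ≤ 2 * m * t := by exact_mod_cast hL
    have h3 : (t : ℝ) ≤ 2 ^ t := by exact_mod_cast Nat.lt_two_pow_self.le
    have hm' : (1 : ℝ) ≤ m := by exact_mod_cast hm
    have h4 : (2 * m : ℝ) ≤ (2 * m) ^ t := le_self_pow₀ (by linarith) (by omega)
    exact h2.trans (by gcongr)
  have h2 : δ ^ (T + 2 * L) ≤ (δ ^ 3) ^ t := by
    rw [← pow_mul]; exact pow_le_pow_right₀ hδ (by omega)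
  have h3 : (T.factorial : ℝ) ≤ (t : ℝ) ^ t := by
    exact_mod_cast (Nat.factorial_le hT).trans (Nat.factorial_le_pow t)
  have h4 : A ^ (2 * L) ≤ (A ^ 2) ^ t := by
    rw [← pow_mul]; exact pow_le_pow_right₀ hA (by omega)
  have h5 : r ^ T ≤ r ^ t := pow_le_pow_right₀ hr hT
  have h6 : c ≤ c ^ t := le_self_pow₀ hc (by omega)
  have : (c * (2 * m) * 2 * δ ^ 3 * A ^ 2 * r) ^ t * (t : ℝ) ^ t =
      c ^ t * ((2 * m) ^ t * 2 ^ t) * ((δ ^ 3) ^ t * ((t : ℝ) ^ t * ((A ^ 2) ^ t * r ^ t))) := by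
    simp only [mul_pow]; ring
  rw [this]
  gcongr

/-- The comparison of growth rates that ends the argument. -/
lemma num_final {t d : ℕ} {y H c₂ c₃ : ℝ} (ht : 1 ≤ t) (hd : 1 ≤ d) (hc₃ : 0 ≤ c₃) (hc₂ : 0 ≤ c₂)
    (hH0 : 0 ≤ H) (h1 : 1 ≤ y * H ^ (d - 1))
    (hy : y * (t : ℝ) ^ ((2 * d + 1) * t) ≤ c₃ ^ t * ((t : ℝ) ^ t) ^ 2)
    (hH : H ≤ c₂ ^ t * ((t : ℝ) ^ t) ^ 2) : (t : ℝ) ≤ c₃ * c₂ ^ (d - 1) := by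
  have ht' : (0 : ℝ) < t := by exact_mod_cast ht
  set u : ℝ := (t : ℝ) ^ t with hu
  have hu0 : 0 < u := by positivity
  have h2 : (t : ℝ) ^ ((2 * d + 1) * t) = u ^ (2 * d + 1) := by
    rw [hu, ← pow_mul, mul_comm]
  rw [h2] at hy
  obtain ⟨e, rfl⟩ : ∃ e, d = e + 1 := ⟨d - 1, by omega⟩
  rw [Nat.add_sub_cancel] at h1 ⊢
  have h3 : u ^ (2 * (e + 1) + 1) ≤ (c₃ * c₂ ^ e) ^ t * u ^ (2 * (e + 1)) :=
    calc u ^ (2 * (e + 1) + 1) ≤ (y * H ^ e) * u ^ (2 * (e + 1) + 1) :=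
          le_mul_of_one_le_left (by positivity) h1
      _ = (y * u ^ (2 * (e + 1) + 1)) * H ^ e := by ring
      _ ≤ (c₃ ^ t * u ^ 2) * (c₂ ^ t * u ^ 2) ^ e := by gcongr
      _ = _ := by rw [mul_pow, mul_pow, ← pow_mul, ← pow_mul, ← pow_mul, mul_comm t e]; ring
  have h4 : u ≤ (c₃ * c₂ ^ e) ^ t := by
    rw [pow_succ, mul_comm] at h3
    exact le_of_mul_le_mul_right h3 (by positivity)
  by_contra! h5
  exact absurd (pow_lt_pow_left₀ h5 (by positivity) (by omega)) (not_lt.2 h4)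

/-- Schneider's theorem in the form needed here: let `f = Q / σ²` with `σ`, `Q` entire of order at
most three, and let `f` be algebraically independent of the identity function. If `f` satisfies
`f'' = 6 f² - h` with `h` in a number field `K`, it cannot have Taylor expansions over `K` at
infinitely many points of `K` where `σ` does not vanish. -/
theorem schneider_core {K : Type*} [Field K] [NumberField K] (φ : K →+* ℂ) {σ Q : ℂ → ℂ}
    (hσ : Differentiable ℂ σ) (hQ : Differentiable ℂ Q) {C : ℝ} (hC : 0 ≤ C)
    (hσg : ∀ w, ‖σ w‖ ≤ Real.exp (C * (1 + ‖w‖) ^ 3))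
    (hQg : ∀ w, ‖Q w‖ ≤ Real.exp (C * (1 + ‖w‖) ^ 3))
    (z : ℕ → K) (hz : Function.Injective z) (hσz : ∀ k, σ (φ (z k)) ≠ 0)
    (Y : ℕ → PowerSeries K)
    (hY : ∀ k, PowerSeries.map φ (Y k) = tay (φ (z k)) fun w => Q w / σ w ^ 2) (h : K)
    (ode : ∀ k, PowerSeries.derivative K (PowerSeries.derivative K (Y k)) =
      6 * Y k ^ 2 - PowerSeries.C h)
    (indep : ∀ (L : ℕ) (a : Fin L → Fin L → ℂ), (∀ w, σ w ≠ 0 →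
      ∑ i : Fin L, ∑ j : Fin L, a i j * w ^ (i : ℕ) * (Q w / σ w ^ 2) ^ (j : ℕ) = 0) → a = 0) :
    False := by
  classical
  set d := Module.finrank ℚ K with hd
  have hd1 : 1 ≤ d := Module.finrank_pos
  -- The number of points: with `R = t ^ (1/8)` Schwarz's lemma gains `R ^ (m t) = t ^ ((2 d + 1) t)`,
  -- whereas Liouville's inequality together with the factorials costs only `t ^ (2 d t)`.
  obtain ⟨m, hm⟩ : ∃ m : ℕ, m = 8 * (2 * d + 1) := ⟨_, rfl⟩
  have hm1 : 1 ≤ m := by omega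
  have hzφ : Function.Injective fun k => φ (z k) := φ.injective.comp hz
  -- constants depending on the points only
  obtain ⟨ρ, A, hρ, hρ1, hA, hB⟩ := exists_hBd_uniform m z Y h ode
  obtain ⟨δ, hδ, hδi⟩ := exists_denom (insert h ((Finset.range m).image z ∪
    ((Finset.range m).image (fun k => PowerSeries.coeff 0 (Y k)) ∪
      (Finset.range m).image (fun k => PowerSeries.coeff 1 (Y k)))))
  have hzi : ∀ k < m, IsIntegral ℤ ((δ : K) * z k) := fun k hk => hδi _ (by
    simp only [Finset.mem_insert, Finset.mem_union, Finset.mem_image, Finset.mem_range]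
    exact Or.inr (Or.inl ⟨k, hk, rfl⟩))
  have hYi : ∀ k < m, HInt δ 1 (Y k) := fun k hk => hInt_ode (ode k)
    (hδi _ (by
      simp only [Finset.mem_insert, Finset.mem_union, Finset.mem_image, Finset.mem_range]
      exact Or.inr (Or.inr (Or.inl ⟨k, hk, rfl⟩))))
    (hδi _ (by
      simp only [Finset.mem_insert, Finset.mem_union, Finset.mem_image, Finset.mem_range]
      exact Or.inr (Or.inr (Or.inr ⟨k, hk, rfl⟩))))
    (hδi _ (Finset.mem_insert_self _ _))
  obtain ⟨c, hc1, hc⟩ := exists_aux K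
  obtain ⟨R₀, hR₀⟩ : ∃ R₀ : ℝ, ∀ k < m, ‖φ (z k)‖ ≤ R₀ :=
    ⟨∑ k ∈ Finset.range m, ‖φ (z k)‖, fun k hk => Finset.single_le_sum
      (f := fun k => ‖φ (z k)‖) (fun _ _ => norm_nonneg _) (Finset.mem_range.2 hk)⟩
  have hR₀0 : 0 ≤ R₀ := (norm_nonneg _).trans (hR₀ 0 (by omega))
  obtain ⟨s, hs1, hs⟩ : ∃ s : ℝ, 1 ≤ s ∧ ∀ k < m, 1 ≤ s * ‖σ (φ (z k))‖ := by
    refine ⟨1 + ∑ k ∈ Finset.range m, ‖σ (φ (z k))‖⁻¹, ?_, fun k hk => ?_⟩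
    · have : 0 ≤ ∑ k ∈ Finset.range m, ‖σ (φ (z k))‖⁻¹ :=
        Finset.sum_nonneg fun _ _ => by positivity
      linarith
    · have h1 := Finset.single_le_sum (f := fun k => ‖σ (φ (z k))‖⁻¹)
        (fun _ _ => by positivity) (Finset.mem_range.2 hk)
      have h2 : 0 < ‖σ (φ (z k))‖ := norm_pos_iff.2 (hσz k)
      calc (1 : ℝ) = ‖σ (φ (z k))‖⁻¹ * ‖σ (φ (z k))‖ := (inv_mul_cancel₀ h2.ne').symm
        _ ≤ _ := by gcongr; linarith
  obtain ⟨D, hD⟩ : ∃ D : ℝ, D = 1 + 2 * R₀ := ⟨_, rfl⟩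
  obtain ⟨r, hr⟩ : ∃ r : ℝ, r = ρ⁻¹ := ⟨_, rfl⟩
  have hr1 : 1 ≤ r := hr ▸ (one_le_inv₀ hρ).2 hρ1
  have hδ' : (1 : ℝ) ≤ δ := by exact_mod_cast hδ
  obtain ⟨c₀, hc₀⟩ : ∃ c₀ : ℝ, c₀ = 1 * (2 * m) * 2 * δ ^ 3 * A ^ 2 * r := ⟨_, rfl⟩
  obtain ⟨c₁, hc₁⟩ : ∃ c₁ : ℝ, c₁ = c * (2 * m) * 2 * δ ^ 3 * A ^ 2 * r := ⟨_, rfl⟩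
  obtain ⟨c₃, hc₃⟩ : ∃ c₃ : ℝ, c₃ = c₀ * c₁ * s ^ 2 * D ^ m * 2 ^ m * Real.exp ((2 * C + 1) * (16 * m)) := ⟨_, rfl⟩
  have hc₀0 : 0 ≤ c₀ := by rw [hc₀]; positivity
  have hc₁0 : 0 ≤ c₁ := by rw [hc₁]; positivity
  -- `n` is chosen so large that `t ≥ n` contradicts the conclusion of `num_final` and that the points
  -- lie in the disc of radius `R / 2`.
  obtain ⟨n, hn⟩ := exists_nat_gt (max (c₃ * (c₀ * c₁) ^ (d - 1)) ((2 * R₀ + 1) ^ 8))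
  have hn1 := (le_max_left _ _).trans_lt hn
  have hn2 := (le_max_right _ _).trans_lt hn
  have hn0 : 0 < n := by
    have : (0 : ℝ) < n := lt_of_le_of_lt (by positivity) hn2
    exact_mod_cast this
  obtain ⟨L, hL⟩ : ∃ L : ℕ, L = 2 * m * n := ⟨_, rfl⟩
  obtain ⟨T, hT⟩ : ∃ T : ℕ, T = 2 * m * n ^ 2 := ⟨_, rfl⟩
  obtain ⟨ξ, ⟨i₀, j₀, hξ0⟩, hξT, hξb⟩ := hc m n δ ρ A z Y hm1 hn0 hδ hρ hρ1 hA hB hzi hYi L T hL hT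
  set S : ℕ → PowerSeries K := fun k => auxS L (fun i j => (ξ i j : K)) (z k) (Y k) with hS
  set G : ℂ → ℂ := auxG L (fun i j => φ (ξ i j : K)) σ Q with hG
  have hGd : Differentiable ℂ G := differentiable_auxG _ _ hσ hQ
  have htay : ∀ k, tay (φ (z k)) G = tay (φ (z k)) σ ^ (2 * L) * PowerSeries.map φ (S k) :=
    fun k => tay_auxG φ L _ hσ hQ (hσz k) (hY k)
  -- the order of vanishing is finite
  have hex : ∃ t, ∃ k < m, PowerSeries.coeff t (S k) ≠ 0 := by
    by_contra! hcon
    have h0 : S 0 = 0 := by ext t; simpa using hcon t 0 (by omega)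
    have h1 : ∀ w, G w = 0 := eq_zero_of_tay_eq_zero hGd (φ (z 0)) (by rw [htay, h0]; simp)
    have h2 := indep L (fun i j => φ (ξ i j : K)) fun w hw => by
      have := h1 w
      rw [hG, auxG_eq L _ hw] at this
      exact (mul_eq_zero.1 this).resolve_left (pow_ne_zero _ hw)
    have h3 : φ (ξ i₀ j₀ : K) = 0 := congrFun (congrFun h2 i₀) j₀
    rw [map_eq_zero] at h3
    exact hξ0 (by exact_mod_cast h3)
  set t := Nat.find hex with ht
  obtain ⟨k₀, hk₀, hne⟩ := Nat.find_spec hex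
  rw [← ht] at hne
  have hlt : ∀ u < t, ∀ k < m, PowerSeries.coeff u (S k) = 0 := fun u hu k hk => by
    by_contra hcon
    exact Nat.find_min hex hu ⟨k, hk, hcon⟩
  have hTt : T ≤ t := by
    by_contra! hcon
    exact hne (hξT k₀ hk₀ t hcon)
  have hnT : n ≤ T := by
    rw [hT, sq]
    exact le_trans (Nat.le_mul_of_pos_left n (by positivity : 0 < 2 * m * n)) (by
      rw [mul_assoc (2 * m)])
  have ht1 : 1 ≤ t := by omega
  have hLt : L ≤ t := by
    refine le_trans ?_ hTt
    rw [hL, hT, sq, ← mul_assoc]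
    exact Nat.le_mul_of_pos_right (2 * m * n) hn0
  have hL2 : L ^ 2 ≤ 2 * m * t := by
    calc L ^ 2 = 2 * m * T := by rw [hL, hT]; ring
      _ ≤ _ := Nat.mul_le_mul_left _ hTt
  have hnt : (n : ℝ) ≤ t := by exact_mod_cast hnT.trans hTt
  have ht0 : (0 : ℝ) < t := by exact_mod_cast ht1
  obtain ⟨x, hx⟩ : ∃ x : ℝ, x = c₁ ^ t * (t : ℝ) ^ t := ⟨_, rfl⟩
  have hξx : ∀ i j, house (ξ i j : K) ≤ x := fun i j =>
    (hξb i j).trans (by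
      rw [hx, hc₁, ← hr]
      exact num_bound ht1 hm1 hTt hLt hL2 hc1 hδ' hA hr1)
  have hx0 : 0 ≤ x := by rw [hx]; positivity
  -- `γ` is the first nonvanishing coefficient, with its denominator cleared.
  set γ : K := (δ : K) ^ (t + 2 * L) * ((t.factorial : K) * PowerSeries.coeff t (S k₀)) with hγ
  have hγi : IsIntegral ℤ γ := hInt_auxS (fun i j => (ξ i j).2) (hzi _ hk₀) (hYi _ hk₀) t
  have hγ0 : γ ≠ 0 := by
    have h4 : (δ : K) ≠ 0 := by exact_mod_cast (by omega : δ ≠ 0)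
    have h5 : (t.factorial : K) ≠ 0 := by exact_mod_cast t.factorial_ne_zero
    exact mul_ne_zero (pow_ne_zero _ h4) (mul_ne_zero h5 hne)
  have hP := num_bound (c := 1) ht1 hm1 le_rfl hLt hL2 le_rfl hδ' hA hr1
  rw [← hc₀] at hP
  have hD0 : 0 ≤ D := by rw [hD]; positivity
  have hγh : house γ ≤ (c₀ * c₁) ^ t * ((t : ℝ) ^ t) ^ 2 := by
    have e : γ = ((δ ^ (t + 2 * L) : ℕ) : K) *
        ((t.factorial : K) * PowerSeries.coeff t (S k₀)) := by rw [Nat.cast_pow]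
    rw [e, house_nat_mul, house_nat_mul, Nat.cast_pow]
    have h1 := house_coeff_auxS hρ hA hξx (hB _ hk₀).2 (hB _ hk₀).1 t
    rw [← hr] at h1
    calc (δ : ℝ) ^ (t + 2 * L) * (t.factorial * house (PowerSeries.coeff t (S k₀)))
        ≤ (δ : ℝ) ^ (t + 2 * L) * (t.factorial * (L ^ 2 * (x * (A ^ (2 * L) * r ^ t)))) := by
          gcongr
      _ = (1 * (L : ℝ) ^ 2 * (δ ^ (t + 2 * L) * (t.factorial * (A ^ (2 * L) * r ^ t)))) * x := by
          ring
      _ ≤ (c₀ ^ t * (t : ℝ) ^ t) * x := mul_le_mul_of_nonneg_right hP hx0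
      _ = _ := by rw [hx, mul_pow]; ring
  -- The radius `R = t ^ (1/8)`: as `L` is of order `t ^ (1/2)`, the growth `exp (O(L R³))` of the
  -- auxiliary function is at most exponential in `t`.
  obtain ⟨R, hR0, hR8⟩ : ∃ R : ℝ, 0 ≤ R ∧ R ^ 8 = t :=
    ⟨(t : ℝ) ^ ((8 : ℕ)⁻¹ : ℝ), by positivity, Real.rpow_inv_natCast_pow ht0.le (by norm_num)⟩
  have hRR : 2 * R₀ + 1 ≤ R := by
    refine le_of_pow_le_pow_left₀ (n := 8) (by norm_num) hR0 ?_
    rw [hR8]; linarith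
  have hR1 : 1 ≤ R := by linarith
  have hLR : (L : ℝ) * (1 + R) ^ 3 ≤ 16 * m * t := by
    have h1 : (L : ℝ) ≤ 2 * m * R ^ 4 := by
      refine le_of_sq_le_sq ?_ (by positivity)
      have h2 : (L : ℝ) ^ 2 ≤ 2 * m * t := by exact_mod_cast hL2
      have hm' : (1 : ℝ) ≤ m := by exact_mod_cast hm1
      calc (L : ℝ) ^ 2 ≤ 2 * m * 1 * t := by linarith
        _ ≤ (2 * m) * (2 * m) * t := by gcongr; linarith
        _ = _ := by rw [← hR8]; ring
    calc (L : ℝ) * (1 + R) ^ 3 ≤ (2 * m * R ^ 4) * (R + R) ^ 3 := by gcongr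
      _ = 16 * m * R ^ 7 := by ring
      _ ≤ 16 * m * R ^ 8 := by gcongr <;> linarith
      _ = _ := by rw [hR8]
  obtain ⟨M, hM⟩ : ∃ M : ℝ, M = L ^ 2 * (x * Real.exp ((2 * C + 1) * (16 * m)) ^ t) := ⟨_, rfl⟩
  have hM0 : 0 ≤ M := by rw [hM]; positivity
  have hMb : ∀ w, ‖w‖ = R → ‖G w‖ ≤ M := fun w hw => by
    refine (norm_auxG_le (x := x) (fun i j => (norm_embedding_le_house _ _).trans (hξx i j))
      hR1 hw hC (hσg w) (hQg w)).trans ?_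
    rw [hM, ← Real.exp_nat_mul]
    refine mul_le_mul_of_nonneg_left (mul_le_mul_of_nonneg_left (Real.exp_le_exp.2 ?_) hx0)
      (by positivity)
    calc (2 * C + 1) * ((L : ℝ) * (1 + R) ^ 3) ≤ (2 * C + 1) * (16 * m * t) := by gcongr
      _ = _ := by ring
  have hdvd : ∀ k < m, (PowerSeries.X : PowerSeries ℂ) ^ t ∣ tay (φ (z k)) G := fun k hk => by
    rw [htay]
    refine Dvd.dvd.mul_left (PowerSeries.X_pow_dvd_iff.2 fun u hu => ?_) _
    rw [PowerSeries.coeff_map, hlt u hu k hk, map_zero]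
  have hsch := schwarz_bound m t (fun k => φ (z k)) hzφ hGd hdvd (by linarith) hMb
    (fun k hk => (hR₀ k hk).trans (by linarith)) (D := D) (by linarith)
    (fun i hi j hj => (norm_sub_le _ _).trans (by have := hR₀ i hi; have := hR₀ j hj; linarith))
    hk₀
  have hcoe : PowerSeries.coeff t (tay (φ (z k₀)) G) =
      σ (φ (z k₀)) ^ (2 * L) * φ (PowerSeries.coeff t (S k₀)) := by
    rw [htay, coeff_mul_of_dvd (fun u hu => by
      rw [PowerSeries.coeff_map, hlt u hu k₀ hk₀, map_zero]), PowerSeries.coeff_map]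
    congr 1
    rw [← tay_pow (hσ.analyticAt _), coeff_zero_tay]
  have hRm : R ^ (m * t) = (t : ℝ) ^ ((2 * d + 1) * t) := by
    rw [hm, mul_assoc, pow_mul, hR8]
  set y := ‖φ γ‖ with hy
  have hyb : y * (t : ℝ) ^ ((2 * d + 1) * t) ≤ c₃ ^ t * ((t : ℝ) ^ t) ^ 2 := by
    have e : y = (δ : ℝ) ^ (t + 2 * L) * (t.factorial * ‖φ (PowerSeries.coeff t (S k₀))‖) := by
      rw [hy, hγ]; simp
    have h1 : (R / 2) ^ (m * t) * ‖PowerSeries.coeff t (tay (φ (z k₀)) G)‖ ≤ D ^ (m * t) * M := by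
      rw [← mul_div_assoc, le_div_iff₀ (by positivity)] at hsch
      linarith
    rw [hcoe, norm_mul, norm_pow] at h1
    set q := ‖φ (PowerSeries.coeff t (S k₀))‖ with hq
    have h2 : 1 ≤ (s * ‖σ (φ (z k₀))‖) ^ (2 * L) := one_le_pow₀ (hs _ hk₀)
    have h3 : R ^ (m * t) * q ≤ 2 ^ (m * t) * s ^ (2 * t) * (D ^ (m * t) * M) := by
      calc R ^ (m * t) * q ≤ R ^ (m * t) * q * (s * ‖σ (φ (z k₀))‖) ^ (2 * L) :=
            le_mul_of_one_le_right (by positivity) h2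
        _ = 2 ^ (m * t) * s ^ (2 * L) *
            ((R / 2) ^ (m * t) * (‖σ (φ (z k₀))‖ ^ (2 * L) * q)) := by
            rw [div_pow, mul_pow]; field_simp
        _ ≤ 2 ^ (m * t) * s ^ (2 * L) * (D ^ (m * t) * M) := by gcongr
        _ ≤ _ := by
            have h0 : 0 ≤ D ^ (m * t) * M := by positivity
            gcongr
    rw [e, ← hRm]
    calc _ = (δ : ℝ) ^ (t + 2 * L) * t.factorial * (R ^ (m * t) * q) := by ring
      _ ≤ (δ : ℝ) ^ (t + 2 * L) * t.factorial *
          (2 ^ (m * t) * s ^ (2 * t) * (D ^ (m * t) * M)) := by gcongr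
      _ ≤ (δ : ℝ) ^ (t + 2 * L) * t.factorial *
          (2 ^ (m * t) * s ^ (2 * t) * (D ^ (m * t) * M)) * (A ^ (2 * L) * r ^ t) :=
          le_mul_of_one_le_right (by positivity)
            (one_le_mul_of_one_le_of_one_le (one_le_pow₀ hA) (one_le_pow₀ hr1))
      _ = (1 * (L : ℝ) ^ 2 * (δ ^ (t + 2 * L) * (t.factorial * (A ^ (2 * L) * r ^ t)))) *
          (2 ^ (m * t) * s ^ (2 * t) * D ^ (m * t) *
            (x * Real.exp ((2 * C + 1) * (16 * m)) ^ t)) := by rw [hM]; ring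
      _ ≤ (c₀ ^ t * (t : ℝ) ^ t) * (2 ^ (m * t) * s ^ (2 * t) * D ^ (m * t) *
            (x * Real.exp ((2 * C + 1) * (16 * m)) ^ t)) :=
          mul_le_mul_of_nonneg_right hP (by positivity)
      _ = _ := by
          rw [hx, hc₃, pow_mul, pow_mul, pow_mul]; simp only [mul_pow]; ring
  have := num_final (y := y) (H := house γ) (c₂ := c₀ * c₁) (c₃ := c₃) ht1 hd1 (by rw [hc₃]; positivity)
    (mul_nonneg hc₀0 hc₁0) (house_nonneg _) (liouville_ineq φ hγi hγ0) hyb hγh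
  linarith

end Core

/-! ### The sigma function -/

/-- The Weierstrass elementary factor of genus two, `E(u) = (1 - u) exp(u + u²/2)`. -/
def elemFactor (u : ℂ) : ℂ := (1 - u) * Complex.exp (u + u ^ 2 / 2)

lemma hasDerivAt_elemFactor (u : ℂ) :
    HasDerivAt elemFactor (-u ^ 2 * Complex.exp (u + u ^ 2 / 2)) u := by
  have h1 : HasDerivAt (fun u : ℂ => u + u ^ 2 / 2) (1 + u) u := by
    have := (hasDerivAt_id u).add (((hasDerivAt_id u).pow 2).div_const 2)
    refine this.congr_deriv ?_
    simp
  have h2 := ((hasDerivAt_id u).const_sub 1).mul h1.cexp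
  refine h2.congr_deriv ?_
  simp only [id]
  ring

lemma differentiable_elemFactor : Differentiable ℂ elemFactor :=
  fun u => (hasDerivAt_elemFactor u).differentiableAt

lemma norm_elemFactor_sub_one_le (u : ℂ) :
    ‖elemFactor u - 1‖ ≤ Real.exp (‖u‖ + ‖u‖ ^ 2 / 2) * ‖u‖ ^ 3 := by
  have h := (convex_closedBall (0 : ℂ) ‖u‖).norm_image_sub_le_of_norm_hasDerivWithin_le
    (f := elemFactor) (f' := fun u => -u ^ 2 * Complex.exp (u + u ^ 2 / 2))
    (C := ‖u‖ ^ 2 * Real.exp (‖u‖ + ‖u‖ ^ 2 / 2)) (x := 0) (y := u)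
    (fun x _ => (hasDerivAt_elemFactor x).hasDerivWithinAt) ?_ (by simp) (by simp)
  · have h0 : elemFactor 0 = 1 := by simp [elemFactor]
    rw [h0, sub_zero] at h
    calc _ ≤ _ := h
      _ = _ := by ring
  · intro x hx
    have hx' : ‖x‖ ≤ ‖u‖ := by simpa using hx
    rw [norm_mul, norm_neg, norm_pow, Complex.norm_exp]
    gcongr
    calc (x + x ^ 2 / 2).re ≤ ‖x + x ^ 2 / 2‖ := Complex.re_le_norm _
      _ ≤ ‖x‖ + ‖x‖ ^ 2 / 2 := by
        refine (norm_add_le _ _).trans ?_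
        simp
      _ ≤ _ := by gcongr

lemma exp_three_half_le : Real.exp (3 / 2 : ℝ) ≤ 5 := by
  have h1 := Real.exp_one_lt_d9
  have h2 : Real.exp (1 / 2 : ℝ) ^ 2 = Real.exp 1 := by
    rw [← Real.exp_nat_mul]; norm_num
  have h4 : Real.exp (1 / 2 : ℝ) ≤ 1.7 := by
    by_contra hc
    push Not at hc
    nlinarith
  have h5 : Real.exp (3 / 2 : ℝ) = Real.exp 1 * Real.exp (1 / 2) := by
    rw [← Real.exp_add]; norm_num
  rw [h5]
  have := Real.exp_pos (1/2 : ℝ)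
  nlinarith

lemma norm_elemFactor_le (u : ℂ) : ‖elemFactor u‖ ≤ Real.exp (5 * ‖u‖ ^ 3) := by
  rcases le_total ‖u‖ 1 with hu | hu
  · calc ‖elemFactor u‖ = ‖1 + (elemFactor u - 1)‖ := by congr 1; ring
      _ ≤ 1 + Real.exp (‖u‖ + ‖u‖ ^ 2 / 2) * ‖u‖ ^ 3 := by
        refine (norm_add_le _ _).trans ?_
        rw [norm_one]
        gcongr
        exact norm_elemFactor_sub_one_le u
      _ ≤ 1 + 5 * ‖u‖ ^ 3 := by
        gcongr
        refine le_trans ?_ exp_three_half_le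
        gcongr
        nlinarith [norm_nonneg u]
      _ ≤ _ := by linarith [Real.add_one_le_exp (5 * ‖u‖ ^ 3)]
  · rw [elemFactor, norm_mul, Complex.norm_exp]
    calc ‖1 - u‖ * Real.exp (u + u ^ 2 / 2).re
        ≤ Real.exp ‖u‖ * Real.exp (‖u‖ + ‖u‖ ^ 2 / 2) := by
          gcongr
          · refine (norm_sub_le _ _).trans ?_
            rw [norm_one]
            linarith [Real.add_one_le_exp ‖u‖]
          · refine (Complex.re_le_norm _).trans ((norm_add_le _ _).trans ?_)
            simp
      _ = Real.exp (2 * ‖u‖ + ‖u‖ ^ 2 / 2) := by rw [← Real.exp_add]; ring_nf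
      _ ≤ _ := by
        gcongr
        have h1 : ‖u‖ ≤ ‖u‖ ^ 3 := by nlinarith [mul_nonneg (norm_nonneg u) (norm_nonneg u)]
        have h2 : ‖u‖ ^ 2 ≤ ‖u‖ ^ 3 := by nlinarith [mul_nonneg (norm_nonneg u) (norm_nonneg u)]
        linarith

lemma norm_factor_sub_one_le {r : ℝ} (hr : 0 < r) {l z : ℂ} (h1 : ‖l‖⁻¹ ≤ 1 / r)
    (hz : ‖z‖ ≤ r) : ‖elemFactor (z / l) - 1‖ ≤ 5 * r ^ 3 * ‖l‖⁻¹ ^ 3 := by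
  have h2 : ‖z / l‖ ≤ 1 := by
    rw [norm_div, div_eq_mul_inv]
    calc ‖z‖ * ‖l‖⁻¹ ≤ r * (1 / r) := by gcongr
      _ = 1 := by field_simp
  refine (norm_elemFactor_sub_one_le _).trans ?_
  rw [mul_assoc]
  gcongr
  · refine le_trans ?_ exp_three_half_le
    gcongr
    nlinarith [norm_nonneg (z / l)]
  · rw [norm_div, div_eq_mul_inv, mul_pow]
    gcongr

namespace PeriodPair
variable (L : PeriodPair)

/-- The entire function `∏ E(z/ω)`, so that `σ(z) = z ∏ E(z/ω)`. The factor with `ω = 0` is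
`E(z/0) = E(0) = 1`, so the product may run over the whole lattice. -/
def canProd (z : ℂ) : ℂ := ∏' l : L.lattice, elemFactor (z / (l : ℂ))

lemma summable_norm_inv_cube : Summable fun l : L.lattice => ‖(l : ℂ)‖⁻¹ ^ 3 := by
  have : Summable fun l : L.lattice => ‖l‖ ^ (-3 : ℝ) :=
    ZLattice.summable_norm_rpow _ _ (by simp; norm_num)
  refine this.congr fun l => ?_
  rw [Real.rpow_neg (norm_nonneg _), inv_pow]
  norm_cast

lemma multipliable_canProd {r : ℝ} (hr : 0 < r) :
    MultipliableLocallyUniformlyOn (fun (l : L.lattice) (z : ℂ) => elemFactor (z / (l : ℂ)))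
      (Metric.ball 0 r) := by
  have := Summable.multipliableLocallyUniformlyOn_one_add (K := Metric.ball (0 : ℂ) r)
    (f := fun (l : L.lattice) (z : ℂ) => elemFactor (z / (l : ℂ)) - 1)
    (u := fun l : L.lattice => 5 * r ^ 3 * ‖(l : ℂ)‖⁻¹ ^ 3)
    Metric.isOpen_ball (L.summable_norm_inv_cube.mul_left _) ?_ ?_
  · simpa using this
  · -- away from finitely many lattice points one has `‖z / l‖ ≤ 1` on the whole ball
    have hev := L.summable_norm_inv_cube.tendsto_cofinite_zero.eventually_le_const
      (show (0 : ℝ) < (1 / r) ^ 3 by positivity)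
    filter_upwards [hev] with l hl z hz
    have h1 : ‖(l : ℂ)‖⁻¹ ≤ 1 / r := le_of_pow_le_pow_left₀ three_ne_zero (by positivity) hl
    have hz' : ‖z‖ ≤ r := by simpa using (Metric.mem_ball.1 hz).le
    exact norm_factor_sub_one_le hr h1 hz'
  · intro i
    have : Differentiable ℂ fun z : ℂ => elemFactor (z / (i : ℂ)) - 1 :=
      (differentiable_elemFactor.comp (differentiable_id.div_const _)).sub_const _
    exact this.continuous.continuousOn
end PeriodPair

namespace PeriodPair
variable (L : PeriodPair)
open Filter Topology

lemma differentiable_factor (l : ℂ) : Differentiable ℂ fun z : ℂ => elemFactor (z / l) :=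
  differentiable_elemFactor.comp (differentiable_id.div_const _)

lemma differentiable_canProd : Differentiable ℂ L.canProd := by
  intro z
  have hr : 0 < ‖z‖ + 1 := by positivity
  have h := (L.multipliable_canProd hr).hasProdLocallyUniformlyOn
  rw [hasProdLocallyUniformlyOn_iff_tendstoLocallyUniformlyOn] at h
  have h2 := h.differentiableOn (Eventually.of_forall fun s => by
    refine DifferentiableOn.fun_finsetProd ?_
    intro i _
    exact (differentiable_factor (i : ℂ)).differentiableOn) Metric.isOpen_ball
  exact h2.differentiableAt (Metric.isOpen_ball.mem_nhds (by simp))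

lemma summable_factor (z : ℂ) :
    Summable fun l : L.lattice => ‖elemFactor (z / (l : ℂ)) - 1‖ := by
  have hr : 0 < ‖z‖ + 1 := by positivity
  refine Summable.of_norm_bounded_eventually
    (L.summable_norm_inv_cube.mul_left (5 * (‖z‖ + 1) ^ 3)) ?_
  have hev := L.summable_norm_inv_cube.tendsto_cofinite_zero.eventually_le_const
    (show (0 : ℝ) < (1 / (‖z‖ + 1)) ^ 3 by positivity)
  filter_upwards [hev] with l hl
  have h1 : ‖(l : ℂ)‖⁻¹ ≤ 1 / (‖z‖ + 1) :=
    le_of_pow_le_pow_left₀ three_ne_zero (by positivity) hl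
  rw [norm_norm]
  exact norm_factor_sub_one_le hr h1 (by linarith)

lemma factor_ne_zero {z : ℂ} (hz : z ∉ L.lattice) (l : L.lattice) :
    elemFactor (z / (l : ℂ)) ≠ 0 := by
  rw [elemFactor]
  refine mul_ne_zero ?_ (Complex.exp_ne_zero _)
  intro h
  by_cases hl : (l : ℂ) = 0
  · simp [hl] at h
  · have h' : (l : ℂ) - z = 0 := by
      field_simp at h
      simpa using h
    apply hz
    rw [← sub_eq_zero.1 h']
    exact l.2

lemma canProd_ne_zero {z : ℂ} (hz : z ∉ L.lattice) : L.canProd z ≠ 0 := by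
  have := tprod_one_add_ne_zero_of_summable
    (f := fun l : L.lattice => elemFactor (z / (l : ℂ)) - 1)
    (fun l => by simpa using L.factor_ne_zero hz l) (L.summable_factor z)
  simpa [canProd] using this

lemma norm_canProd_le (z : ℂ) :
    ‖L.canProd z‖ ≤ Real.exp (5 * (∑' l : L.lattice, ‖(l : ℂ)‖⁻¹ ^ 3) * ‖z‖ ^ 3) := by
  have hm : Multipliable fun l : L.lattice => elemFactor (z / (l : ℂ)) := by
    have := multipliable_one_add_of_summable (L.summable_factor z)
    simpa using this
  refine le_of_tendsto hm.hasProd.norm (Eventually.of_forall fun s => ?_)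
  calc ∏ l ∈ s, ‖elemFactor (z / (l : ℂ))‖
      ≤ ∏ l ∈ s, Real.exp (5 * ‖z‖ ^ 3 * ‖(l : ℂ)‖⁻¹ ^ 3) := by
        refine Finset.prod_le_prod (fun _ _ => norm_nonneg _) fun l _ => ?_
        refine (norm_elemFactor_le _).trans_eq ?_
        rw [norm_div, div_eq_mul_inv, mul_pow, mul_assoc]
    _ = Real.exp (5 * ‖z‖ ^ 3 * ∑ l ∈ s, ‖(l : ℂ)‖⁻¹ ^ 3) := by
        rw [← Real.exp_sum, Finset.mul_sum]
    _ ≤ Real.exp (5 * ‖z‖ ^ 3 * ∑' l : L.lattice, ‖(l : ℂ)‖⁻¹ ^ 3) := by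
        gcongr
        exact L.summable_norm_inv_cube.sum_le_tsum _ fun _ _ => by positivity
    _ = _ := by ring_nf

/-- The summand of `ζ(z) - 1/z` at the lattice point `l`. -/
def zetaTerm (l : L.lattice) (z : ℂ) : ℂ :=
  if (l : ℂ) = 0 then 0 else 1 / (z - l) + 1 / l + z / l ^ 2

lemma logDeriv_factor {z : ℂ} (hz : z ∉ L.lattice) (l : L.lattice) :
    logDeriv (fun z : ℂ => elemFactor (z / (l : ℂ))) z = L.zetaTerm l z := by
  rw [zetaTerm]
  split_ifs with hl
  · simp [hl, logDeriv_apply]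
  · have h1 := HasDerivAt.comp (h₂ := elemFactor) z (hasDerivAt_elemFactor (z / l))
      ((hasDerivAt_id z).div_const (l : ℂ))
    change HasDerivAt (fun z : ℂ => elemFactor (z / (l : ℂ))) _ z at h1
    have h3 : z - l ≠ 0 := fun h => hz (by rw [sub_eq_zero.1 h]; exact l.2)
    have h4 : (l : ℂ) - z ≠ 0 := fun h => h3 (by rw [← neg_sub, h, neg_zero])
    have h5 : 1 - z / (l : ℂ) ≠ 0 := by
      intro h; field_simp at h; exact h4 (by simpa using h)
    rw [logDeriv_apply, h1.deriv, elemFactor, div_eq_iff (mul_ne_zero h5 (Complex.exp_ne_zero _))]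
    field_simp
    ring

lemma hasSumLocallyUniformly_zetaTerm :
    HasSumLocallyUniformly L.zetaTerm (∑' l, L.zetaTerm l ·) := by
  refine L.hasSumLocallyUniformly_aux (u := fun r l => (2 * r ^ 2) * ‖(l : ℂ)‖⁻¹ ^ 3) _
    (fun _ _ ↦ L.summable_norm_inv_cube.mul_left _) fun r hr ↦
    Filter.eventually_atTop.mpr ⟨2 * r, ?_⟩
  rintro _ h s hs l rfl
  rw [zetaTerm]
  split_ifs with h0
  · rw [norm_zero]; positivity
  · have h1 : 0 < ‖(l : ℂ)‖ := norm_pos_iff.2 h0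
    have h2 : ‖(l : ℂ)‖ / 2 ≤ ‖s - l‖ := by
      rw [norm_sub_rev]
      exact le_trans (by linarith) (norm_sub_norm_le (l : ℂ) s)
    have h3 : s - l ≠ 0 := norm_pos_iff.1 (by linarith)
    have h4 : 1 / (s - l) + 1 / (l : ℂ) + s / (l : ℂ) ^ 2 = s ^ 2 / ((s - l) * (l : ℂ) ^ 2) := by
      field_simp
      ring
    rw [h4, norm_div, norm_mul, norm_pow, norm_pow]
    calc ‖s‖ ^ 2 / (‖s - l‖ * ‖(l : ℂ)‖ ^ 2) ≤ r ^ 2 / (‖(l : ℂ)‖ / 2 * ‖(l : ℂ)‖ ^ 2) := by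
          gcongr
      _ = _ := by field_simp

lemma deriv_zetaTerm {z : ℂ} (hz : z ∉ L.lattice) (l : L.lattice) :
    HasDerivAt (L.zetaTerm l)
      (-(if (l : ℂ) = 0 then 0 else (1 / (z - l) ^ 2 - 1 / (l : ℂ) ^ 2))) z := by
  unfold zetaTerm
  split_ifs with hl
  · simpa using hasDerivAt_const z (0 : ℂ)
  · have h3 : z - l ≠ 0 := fun h => hz (by rw [sub_eq_zero.1 h]; exact l.2)
    have h := ((((hasDerivAt_id z).sub_const (l : ℂ)).inv h3).add_const (1 / (l : ℂ))).add
      ((hasDerivAt_id z).div_const ((l : ℂ) ^ 2))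
    simp only [id, one_div] at h ⊢
    refine h.congr_deriv ?_
    field_simp
    ring

lemma deriv_tsum_zetaTerm {z : ℂ} (hz : z ∉ L.lattice) :
    HasDerivAt (fun z => ∑' l, L.zetaTerm l z) (-L.weierstrassPExcept 0 z) z := by
  have hopen : IsOpen (L.latticeᶜ : Set ℂ) := L.isClosed_lattice.isOpen_compl
  have h1 := L.hasSumLocallyUniformly_zetaTerm
  rw [hasSumLocallyUniformly_iff_tendstoLocallyUniformly] at h1
  have hd : ∀ (s : Finset L.lattice) (x : ℂ), x ∈ (L.latticeᶜ : Set ℂ) →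
      HasDerivAt (fun z => ∑ l ∈ s, L.zetaTerm l z)
       (∑ l ∈ s, -(if (l : ℂ) = 0 then 0 else (1 / (x - l) ^ 2 - 1 / (l : ℂ) ^ 2))) x :=
    fun s x hx => HasDerivAt.fun_sum fun l _ => L.deriv_zetaTerm hx l
  have hdiff : ∀ᶠ s in (atTop : Filter (Finset L.lattice)),
      DifferentiableOn ℂ (fun z => ∑ l ∈ s, L.zetaTerm l z) (L.latticeᶜ : Set ℂ) :=
    Eventually.of_forall fun s x hx => (hd s x hx).differentiableAt.differentiableWithinAt
  have h2 := (h1.tendstoLocallyUniformlyOn (s := (L.latticeᶜ : Set ℂ))).deriv hdiff hopen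
  have h3 := h2.tendsto_at hz
  have h4 : HasDerivAt (fun z => ∑' l, L.zetaTerm l z)
      (deriv (fun z => ∑' l, L.zetaTerm l z) z) z :=
    (((h1.tendstoLocallyUniformlyOn (s := (L.latticeᶜ : Set ℂ))).differentiableOn hdiff
      hopen).differentiableAt (hopen.mem_nhds hz)).hasDerivAt
  refine h4.congr_deriv ?_
  refine tendsto_nhds_unique h3 ?_
  have h5 := (L.hasSum_weierstrassPExcept 0 z).neg
  refine Tendsto.congr (fun s => ?_) h5
  exact ((hd s z hz).deriv).symm

/-- `σ(z) = z ∏ E(z/ω)`. -/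
def sig (z : ℂ) : ℂ := z * L.canProd z

lemma differentiable_sig : Differentiable ℂ L.sig := differentiable_id.mul L.differentiable_canProd

lemma sig_ne_zero {z : ℂ} (hz : z ∉ L.lattice) : L.sig z ≠ 0 :=
  mul_ne_zero (fun h => hz (h ▸ zero_mem _)) (L.canProd_ne_zero hz)

lemma deriv_sig_div {z : ℂ} (hz : z ∉ L.lattice) :
    deriv L.sig z / L.sig z = 1 / z + ∑' l, L.zetaTerm l z := by
  have hz0 : z ≠ 0 := fun h => hz (h ▸ zero_mem _)
  have hr : 0 < ‖z‖ + 1 := by positivity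
  have hs : Summable fun l : L.lattice => L.zetaTerm l z :=
    (L.hasSumLocallyUniformly_zetaTerm.hasSum (x := z)).summable
  have h1 : logDeriv L.canProd z = ∑' l, L.zetaTerm l z := by
    have := logDeriv_tprod_eq_tsum
      (f := fun (l : L.lattice) (z : ℂ) => elemFactor (z / (l : ℂ))) Metric.isOpen_ball
      (show z ∈ Metric.ball (0 : ℂ) (‖z‖ + 1) by simp) (L.factor_ne_zero hz)
      (fun l => (differentiable_factor (l : ℂ)).differentiableOn)
      (hs.congr fun l => (L.logDeriv_factor hz l).symm) (L.multipliable_canProd hr)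
      (L.canProd_ne_zero hz)
    rw [show L.canProd = fun z => ∏' l : L.lattice, elemFactor (z / (l : ℂ)) from rfl, this]
    exact tsum_congr fun l => L.logDeriv_factor hz l
  have h2 : logDeriv L.sig z = logDeriv id z + logDeriv L.canProd z :=
    logDeriv_mul (f := id) z hz0 (L.canProd_ne_zero hz) differentiableAt_id
      (L.differentiable_canProd z)
  rw [← logDeriv_apply, h2, h1]
  simp [logDeriv_apply]

/-- Termwise differentiation of the zeta series: `(σ'/σ)' = -℘`. -/
lemma hasDerivAt_zeta {z : ℂ} (hz : z ∉ L.lattice) :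
    HasDerivAt (fun z => deriv L.sig z / L.sig z) (-L.weierstrassP z) z := by
  have hz0 : z ≠ 0 := fun h => hz (h ▸ zero_mem _)
  have hopen : IsOpen (L.latticeᶜ : Set ℂ) := L.isClosed_lattice.isOpen_compl
  have h1 : HasDerivAt (fun z => 1 / z + ∑' l, L.zetaTerm l z)
      (-(z ^ 2)⁻¹ + -L.weierstrassPExcept 0 z) z := by
    have := (hasDerivAt_inv hz0).add (L.deriv_tsum_zetaTerm hz)
    simpa only [one_div] using! this
  have h2 : L.weierstrassP z = L.weierstrassPExcept 0 z + (z ^ 2)⁻¹ := by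
    have := L.weierstrassPExcept_add ⟨0, zero_mem _⟩ z
    simp at this
    rw [← this]
  refine (h1.congr_of_eventuallyEq ?_).congr_deriv ?_
  · filter_upwards [hopen.mem_nhds hz] with x hx
    exact L.deriv_sig_div hx
  · rw [h2]; ring

/-- The numerator of `℘ = (σ'² - σσ'') / σ²`. -/
def sigQ (z : ℂ) : ℂ := deriv L.sig z ^ 2 - L.sig z * deriv (deriv L.sig) z

lemma weierstrassP_eq_sigQ {z : ℂ} (hz : z ∉ L.lattice) :
    L.weierstrassP z = L.sigQ z / L.sig z ^ 2 := by
  have h0 := L.sig_ne_zero hz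
  have hd : Differentiable ℂ (deriv L.sig) := L.differentiable_sig.deriv
  have h1 := (hd z).hasDerivAt.div (L.differentiable_sig z).hasDerivAt h0
  have h2 := (L.hasDerivAt_zeta hz).unique h1
  rw [← neg_neg (L.weierstrassP z), h2, sigQ]
  field_simp
  ring

lemma differentiable_sigQ : Differentiable ℂ L.sigQ := by
  have h := L.differentiable_sig
  exact (h.deriv.pow 2).sub (h.mul h.deriv.deriv)

/-- Cauchy's estimate on a disc of radius one preserves growth of order three. -/
lemma growth_deriv {f : ℂ → ℂ} (hf : Differentiable ℂ f) {C : ℝ} (hC : 0 ≤ C)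
    (h : ∀ w, ‖f w‖ ≤ Real.exp (C * (1 + ‖w‖) ^ 3)) (w : ℂ) :
    ‖deriv f w‖ ≤ Real.exp (8 * C * (1 + ‖w‖) ^ 3) := by
  have := Complex.norm_deriv_le_of_forall_mem_sphere_norm_le (f := f) (c := w) (R := 1)
    (C := Real.exp (8 * C * (1 + ‖w‖) ^ 3)) one_pos hf.diffContOnCl ?_
  · simpa using this
  · intro z hz
    refine (h z).trans ?_
    have h1 : ‖z‖ ≤ ‖w‖ + 1 := by
      have : ‖z - w‖ = 1 := by simpa [dist_eq_norm] using hz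
      calc ‖z‖ = ‖w + (z - w)‖ := by congr 1; ring
        _ ≤ _ := norm_add_le _ _
        _ = _ := by rw [this]
    have h2 : (1 + ‖z‖) ^ 3 ≤ (2 * (1 + ‖w‖)) ^ 3 := by
      gcongr
      linarith [norm_nonneg w]
    have h3 : C * (1 + ‖z‖) ^ 3 ≤ C * (2 * (1 + ‖w‖)) ^ 3 := by gcongr
    rw [Real.exp_le_exp]
    linarith [h3, show C * (2 * (1 + ‖w‖)) ^ 3 = 8 * C * (1 + ‖w‖) ^ 3 by ring]

lemma exists_growth : ∃ C : ℝ, 0 ≤ C ∧ (∀ w, ‖L.sig w‖ ≤ Real.exp (C * (1 + ‖w‖) ^ 3)) ∧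
    ∀ w, ‖L.sigQ w‖ ≤ Real.exp (C * (1 + ‖w‖) ^ 3) := by
  obtain ⟨S, hS⟩ : ∃ S, S = ∑' l : L.lattice, ‖(l : ℂ)‖⁻¹ ^ 3 := ⟨_, rfl⟩
  have hS0 : 0 ≤ S := hS ▸ tsum_nonneg fun l => by positivity
  obtain ⟨C, hCdef⟩ : ∃ C, C = 5 * S + 1 := ⟨_, rfl⟩
  have hC : 0 ≤ C := by rw [hCdef]; positivity
  have h0 : ∀ w, ‖L.sig w‖ ≤ Real.exp (C * (1 + ‖w‖) ^ 3) := by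
    intro w
    have hw := norm_nonneg w
    rw [sig, norm_mul]
    calc ‖w‖ * ‖L.canProd w‖ ≤ Real.exp ‖w‖ * Real.exp (5 * S * ‖w‖ ^ 3) := by
          gcongr
          · linarith [Real.add_one_le_exp ‖w‖]
          · rw [hS]; exact L.norm_canProd_le w
      _ = Real.exp (‖w‖ + 5 * S * ‖w‖ ^ 3) := by rw [Real.exp_add]
      _ ≤ _ := by
        have h1 : ‖w‖ ≤ (1 + ‖w‖) ^ 3 := by nlinarith [mul_nonneg hw hw, mul_nonneg hw (mul_nonneg hw hw)]
        have h2 : 5 * S * ‖w‖ ^ 3 ≤ 5 * S * (1 + ‖w‖) ^ 3 := by gcongr; linarith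
        gcongr
        rw [hCdef]
        linarith
  have hd := L.differentiable_sig
  have h1 := growth_deriv hd hC h0
  have h2 := growth_deriv hd.deriv (by positivity) h1
  refine ⟨128 * C + 1, by positivity, fun w => (h0 w).trans ?_, fun w => ?_⟩
  · gcongr
    linarith
  · obtain ⟨T, hT⟩ : ∃ T, T = (1 + ‖w‖) ^ 3 := ⟨_, rfl⟩
    have hT1 : 1 ≤ T := by rw [hT]; exact one_le_pow₀ (by linarith [norm_nonneg w])
    have a0 := h0 w
    have a1 := h1 w
    have a2 := h2 w
    rw [← hT] at a0 a1 a2 ⊢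
    calc ‖L.sigQ w‖ ≤ ‖deriv L.sig w‖ ^ 2 + ‖L.sig w‖ * ‖deriv (deriv L.sig) w‖ := by
          rw [sigQ]
          refine (norm_sub_le _ _).trans ?_
          rw [norm_pow, norm_mul]
      _ ≤ Real.exp (8 * C * T) ^ 2 + Real.exp (C * T) * Real.exp (8 * (8 * C) * T) := by gcongr
      _ = Real.exp (16 * C * T) + Real.exp (65 * C * T) := by
          rw [← Real.exp_nat_mul, ← Real.exp_add]
          congr 2 <;> (push_cast; ring)
      _ ≤ Real.exp (128 * C * T) + Real.exp (128 * C * T) := by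
          have : 0 ≤ C * T := by positivity
          gcongr <;> norm_num
      _ = 2 * Real.exp (128 * C * T) := by ring
      _ ≤ Real.exp 1 * Real.exp (128 * C * T) := by
          gcongr
          linarith [Real.add_one_le_exp (1 : ℝ)]
      _ = Real.exp (1 + 128 * C * T) := by rw [Real.exp_add]
      _ ≤ _ := by gcongr; linarith
end PeriodPair

/-! ### Comparison with Mathlib's `PeriodPair` -/

/-- The lattice `ℤω₁ + ℤω₂` as a `PeriodPair`. -/
def IsLatticeBasis.pair {ω₁ ω₂ : ℂ} (h : IsLatticeBasis ω₁ ω₂) : PeriodPair := ⟨ω₁, ω₂, h⟩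

section
variable {ω₁ ω₂ : ℂ} (hΩ : IsLatticeBasis ω₁ ω₂)
include hΩ

lemma IsLatticeBasis.latticePts : LatticePts ω₁ ω₂ = hΩ.pair.lattice := by
  ext x
  rw [SetLike.mem_coe, PeriodPair.mem_lattice]
  simp only [LatticePts, Set.mem_ofPred_eq, eq_comm]
  rfl
end

section
variable {ω₁ ω₂ : ℂ} (hΩ : IsLatticeBasis ω₁ ω₂)

lemma mulIndicator_latticePts' (F : ℂ → ℂ) (h0 : F 0 = 1) :
    (LatticePts' ω₁ ω₂).mulIndicator F = (LatticePts ω₁ ω₂).mulIndicator F := by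
  ext x
  by_cases hx : x = 0
  · subst hx
    simp [Set.mulIndicator, h0]
  · have h1 : x ∈ LatticePts' ω₁ ω₂ ↔ x ∈ LatticePts ω₁ ω₂ := ⟨fun h => h.1, fun h => ⟨h, hx⟩⟩
    by_cases h : x ∈ LatticePts ω₁ ω₂
    · rw [Set.mulIndicator_of_mem h, Set.mulIndicator_of_mem (h1.2 h)]
    · rw [Set.mulIndicator_of_notMem h, Set.mulIndicator_of_notMem (mt h1.1 h)]

lemma indicator_latticePts' (F : ℂ → ℂ) (h0 : F 0 = 0) :
    (LatticePts' ω₁ ω₂).indicator F = (LatticePts ω₁ ω₂).indicator F := by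
  ext x
  by_cases hx : x = 0
  · subst hx
    simp [Set.indicator, h0]
  · have h1 : x ∈ LatticePts' ω₁ ω₂ ↔ x ∈ LatticePts ω₁ ω₂ := ⟨fun h => h.1, fun h => ⟨h, hx⟩⟩
    by_cases h : x ∈ LatticePts ω₁ ω₂
    · rw [Set.indicator_of_mem h, Set.indicator_of_mem (h1.2 h)]
    · rw [Set.indicator_of_notMem h, Set.indicator_of_notMem (mt h1.1 h)]

lemma wSigma_eq : wSigma ω₁ ω₂ = hΩ.pair.sig := by
  ext z
  rw [wSigma, PeriodPair.sig, PeriodPair.canProd]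
  congr 1
  have h1 := tprod_subtype (LatticePts' ω₁ ω₂) fun w : ℂ =>
    (1 - z / w) * Complex.exp (z / w + z ^ 2 / (2 * w ^ 2))
  have h2 := tprod_subtype (hΩ.pair.lattice : Set ℂ) fun w : ℂ => elemFactor (z / w)
  rw [h1, mulIndicator_latticePts' _ (by simp), hΩ.latticePts]
  refine Eq.trans ?_ h2.symm
  have h3 : (fun w : ℂ => (1 - z / w) * Complex.exp (z / w + z ^ 2 / (2 * w ^ 2))) =
      fun w : ℂ => elemFactor (z / w) := by
    ext w
    change _ = (1 - z / w) * Complex.exp (z / w + (z / w) ^ 2 / 2)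
    congr 3
    rw [div_pow, div_div, mul_comm]
  rw [h3]

lemma wP_eq {z : ℂ} (hz : z ∉ LatticePts ω₁ ω₂) : wP ω₁ ω₂ z = hΩ.pair.weierstrassP z := by
  rw [hΩ.latticePts] at hz
  have h := (hΩ.pair.hasDerivAt_zeta hz).deriv
  have h1 : wZeta ω₁ ω₂ = fun z => deriv hΩ.pair.sig z / hΩ.pair.sig z := by
    ext x
    rw [wZeta, wSigma_eq hΩ]
  rw [wP, h1, h, neg_neg]

lemma tsum_latticePts' (n : ℕ) (hn : n ≠ 0) :
    ∑' w : LatticePts' ω₁ ω₂, ((w : ℂ) ^ n)⁻¹ = hΩ.pair.G n := by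
  have h1 := tsum_subtype (LatticePts' ω₁ ω₂) fun w : ℂ => (w ^ n)⁻¹
  have h2 := tsum_subtype (hΩ.pair.lattice : Set ℂ) fun w : ℂ => (w ^ n)⁻¹
  rw [h1, indicator_latticePts' _ (by simp [hn]), hΩ.latticePts]
  exact h2.symm

lemma g2_eq : g2 ω₁ ω₂ = hΩ.pair.g₂ := by
  rw [g2, PeriodPair.g₂, tsum_latticePts' hΩ 4 (by norm_num)]

lemma g3_eq : g3 ω₁ ω₂ = hΩ.pair.g₃ := by
  rw [g3, PeriodPair.g₃, tsum_latticePts' hΩ 6 (by norm_num)]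
end

/-! ### The second order equation -/

namespace PeriodPair
variable (L : PeriodPair)
open Filter Topology

lemma countable_lattice : (L.lattice : Set ℂ).Countable := by
  have : Countable L.lattice := L.latticeEquivProd.injective.countable
  exact Set.countable_coe_iff.1 this

lemma compl_mem_nhds {z : ℂ} (hz : z ∉ L.lattice) : (L.latticeᶜ : Set ℂ) ∈ 𝓝 z :=
  L.isClosed_lattice.isOpen_compl.mem_nhds hz

lemma eventually_notMem {z : ℂ} (hz : z ∉ L.lattice) : ∀ᶠ x in 𝓝 z, x ∉ L.lattice :=
  L.compl_mem_nhds hz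

lemma eventually_notMem_zero : ∀ᶠ x in 𝓝[≠] (0 : ℂ), x ∉ L.lattice := by
  have h := L.compl_lattice_sdiff_singleton_mem_nhds 0
  rw [eventually_nhdsWithin_iff]
  filter_upwards [h] with x hx hx0 hxl
  exact hx ⟨hxl, hx0⟩

lemma analyticAt_P {z : ℂ} (hz : z ∉ L.lattice) : AnalyticAt ℂ L.weierstrassP z :=
  L.analyticOnNhd_weierstrassP z hz

lemma analyticAt_P' {z : ℂ} (hz : z ∉ L.lattice) : AnalyticAt ℂ L.derivWeierstrassP z :=
  L.analyticOnNhd_derivWeierstrassP z hz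

lemma hasDerivAt_P {z : ℂ} (hz : z ∉ L.lattice) :
    HasDerivAt L.weierstrassP (L.derivWeierstrassP z) z := by
  have := (L.analyticAt_P hz).differentiableAt.hasDerivAt
  rwa [L.deriv_weierstrassP] at this

lemma hasDerivAt_P' {z : ℂ} (hz : z ∉ L.lattice) :
    HasDerivAt L.derivWeierstrassP (deriv L.derivWeierstrassP z) z :=
  (L.analyticAt_P' hz).differentiableAt.hasDerivAt

/-- `℘(z) = z⁻² + a(z)` with `a` analytic and vanishing at `0`. -/
lemma P_eq_add (z : ℂ) : L.weierstrassP z = 1 / z ^ 2 + L.weierstrassPExcept 0 z := by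
  have := L.weierstrassPExcept_add ⟨0, zero_mem _⟩ z
  simp at this
  rw [← this]
  simp [add_comm]

lemma P'_eq_add (z : ℂ) :
    L.derivWeierstrassP z = -2 / z ^ 3 + L.derivWeierstrassPExcept 0 z := by
  have := L.derivWeierstrassPExcept_sub ⟨0, zero_mem _⟩ z
  simp at this
  rw [← this]
  ring

lemma tendsto_P_zero : Tendsto (fun z => ‖L.weierstrassP z‖) (𝓝[≠] 0) atTop := by
  have h1 : Tendsto (fun z : ℂ => ‖1 / z ^ 2‖) (𝓝[≠] 0) atTop := by
    have h2 : Tendsto (fun z : ℂ => ‖z‖⁻¹) (𝓝[≠] 0) atTop :=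
      tendsto_norm_inv_nhdsNE_zero_atTop.congr fun z => norm_inv z
    refine (h2.atTop_mul_atTop₀ h2).congr fun z => ?_
    rw [norm_div, norm_one, norm_pow, one_div, sq, mul_inv]
  have h3 : Tendsto (fun z : ℂ => ‖L.weierstrassPExcept 0 z‖) (𝓝[≠] 0) (𝓝 0) := by
    have := ((L.analyticAt_weierstrassPExcept 0).continuousAt.norm.tendsto).mono_left
      (nhdsWithin_le_nhds (s := {0}ᶜ))
    simpa using this
  have h4 := h1.atTop_add h3.neg
  refine tendsto_atTop_mono (fun z => ?_) h4
  rw [L.P_eq_add z]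
  have := norm_sub_le (1 / z ^ 2 + L.weierstrassPExcept 0 z) (L.weierstrassPExcept 0 z)
  rw [add_sub_cancel_right] at this
  linarith

lemma isPreconnected_compl : IsPreconnected (L.latticeᶜ : Set ℂ) :=
  (Set.Countable.isConnected_compl_of_one_lt_rank (by simp) L.countable_lattice).isPreconnected

/-- `℘` is not locally constant anywhere off the lattice. -/
lemma not_eventually_const {z : ℂ} (hz : z ∉ L.lattice) (c : ℂ) :
    ¬ ∀ᶠ x in 𝓝 z, L.weierstrassP x = c := by
  intro h
  have h1 := L.analyticOnNhd_weierstrassP.eqOn_of_preconnected_of_eventuallyEq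
    (g := fun _ => c) analyticOnNhd_const L.isPreconnected_compl hz h
  have h2 := L.tendsto_P_zero.eventually_gt_atTop ‖c‖
  obtain ⟨x, hx1, hx2⟩ := (h2.and L.eventually_notMem_zero).exists
  rw [h1 hx2] at hx1
  exact lt_irrefl _ hx1

lemma P'_frequently_ne {z : ℂ} (hz : z ∉ L.lattice) :
    ∀ᶠ x in 𝓝[≠] z, L.derivWeierstrassP x ≠ 0 := by
  rcases (L.analyticAt_P' hz).eventually_eq_zero_or_eventually_ne_zero with h | h
  · exfalso
    obtain ⟨r, hr, hr'⟩ := Metric.eventually_nhds_iff_ball.1 (h.and (L.eventually_notMem hz))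
    refine L.not_eventually_const hz (L.weierstrassP z) ?_
    filter_upwards [Metric.ball_mem_nhds z hr] with x hx
    exact Metric.isOpen_ball.is_const_of_deriv_eq_zero (convex_ball z r).isPreconnected
      (fun y hy => (L.analyticAt_P (hr' y hy).2).differentiableAt.differentiableWithinAt)
      (fun y hy => by rw [L.deriv_weierstrassP]; exact (hr' y hy).1) hx (Metric.mem_ball_self hr)
  · exact h

/-- The second order equation, obtained by differentiating `℘'² = 4℘³ - g₂℘ - g₃` and cancelling
`℘'`. -/
lemma deriv_P' {z : ℂ} (hz : z ∉ L.lattice) :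
    deriv L.derivWeierstrassP z = 6 * L.weierstrassP z ^ 2 - L.g₂ / 2 := by
  have key : ∀ x ∉ L.lattice, L.derivWeierstrassP x ≠ 0 →
      deriv L.derivWeierstrassP x = 6 * L.weierstrassP x ^ 2 - L.g₂ / 2 := by
    intro x hx h0
    have h1 := (L.hasDerivAt_P' hx).pow 2
    have hP := L.hasDerivAt_P hx
    have h2 := (((hP.pow 3).const_mul 4).sub (hP.const_mul L.g₂)).sub_const L.g₃
    have h3 := h1.unique (h2.congr_of_eventuallyEq (by
      filter_upwards [L.eventually_notMem hx] with y hy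
      exact L.derivWeierstrassP_sq y hy))
    refine mul_left_cancel₀ (mul_ne_zero two_ne_zero h0) ?_
    push_cast at h3
    simp at h3
    linear_combination h3
  have hc1 : Tendsto (deriv L.derivWeierstrassP) (𝓝[≠] z) (𝓝 (deriv L.derivWeierstrassP z)) :=
    (L.analyticAt_P' hz).deriv.continuousAt.tendsto.mono_left nhdsWithin_le_nhds
  have hc2 : Tendsto (fun z => 6 * L.weierstrassP z ^ 2 - L.g₂ / 2) (𝓝[≠] z)
      (𝓝 (6 * L.weierstrassP z ^ 2 - L.g₂ / 2)) := by
    have : ContinuousAt (fun z => 6 * L.weierstrassP z ^ 2 - L.g₂ / 2) z := by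
      have := (L.analyticAt_P hz).continuousAt
      fun_prop
    exact this.tendsto.mono_left nhdsWithin_le_nhds
  refine tendsto_nhds_unique hc1 (hc2.congr' ?_)
  filter_upwards [L.P'_frequently_ne hz, (L.eventually_notMem hz).filter_mono nhdsWithin_le_nhds]
    with x h1 h2
  exact (key x h2 h1).symm

lemma hasDerivAt_P'' {z : ℂ} (hz : z ∉ L.lattice) :
    HasDerivAt L.derivWeierstrassP (6 * L.weierstrassP z ^ 2 - L.g₂ / 2) z :=
  L.deriv_P' hz ▸ L.hasDerivAt_P' hz

end PeriodPair

lemma derivative_tay (a : ℂ) (f : ℂ → ℂ) : PowerSeries.derivative ℂ (tay a f) = tay a (deriv f) := by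
  ext n
  rw [PowerSeries.coeff_derivative, coeff_tay, coeff_tay, iteratedDeriv_succ', Nat.factorial_succ]
  have : (n.factorial : ℂ) ≠ 0 := by exact_mod_cast n.factorial_ne_zero
  have : (n + 1 : ℂ) ≠ 0 := by exact_mod_cast n.succ_ne_zero
  push_cast
  field_simp

/-- An analytic function whose Taylor series is constant is locally constant. -/
lemma eventually_const_of_tay {f : ℂ → ℂ} {a : ℂ} (hf : AnalyticAt ℂ f a)
    (h : ∀ n ≠ 0, PowerSeries.coeff n (tay a f) = 0) : ∀ᶠ x in nhds a, f x = f a := by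
  have h1 := hf.hasFPowerSeriesAt.eventually_hasSum_sub
  filter_upwards [h1] with x hx
  have h2 := hx.unique (hasSum_single (f := fun n =>
    (FormalMultilinearSeries.ofScalars ℂ (fun n => iteratedDeriv n f a / n.factorial)) n
      fun _ => x - a) 0 ?_)
  · simpa using h2
  · intro n hn
    have := h n hn
    rw [coeff_tay] at this
    simp [FormalMultilinearSeries.ofScalars, this]

/-- The second order equation `℘'' = 6 ℘² - g₂ / 2` for the Taylor series of `℘` at `z`. -/
lemma PeriodPair.tay_ode (L : PeriodPair) {z : ℂ} (hz : z ∉ L.lattice) :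
    PowerSeries.derivative ℂ (PowerSeries.derivative ℂ (tay z L.weierstrassP)) =
      6 * tay z L.weierstrassP ^ 2 - PowerSeries.C (L.g₂ / 2) := by
  have hP := L.analyticAt_P hz
  rw [derivative_tay, derivative_tay, L.deriv_weierstrassP]
  have h1 : deriv L.derivWeierstrassP =ᶠ[nhds z]
      fun z => 6 * L.weierstrassP z ^ 2 + (-(L.g₂ / 2)) := by
    filter_upwards [L.eventually_notMem hz] with x hx
    rw [L.deriv_P' hx, sub_eq_add_neg]
  have hP2 : AnalyticAt ℂ (fun z => L.weierstrassP z ^ 2) z := hP.pow 2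
  have hP3 : AnalyticAt ℂ (fun z => 6 * L.weierstrassP z ^ 2) z := analyticAt_const.mul hP2
  rw [tay_congr h1, tay_add hP3 analyticAt_const, tay_const_mul 6 hP2, tay_pow hP, tay_const,
    map_neg, ← sub_eq_add_neg]
  rfl

/-! ### Addition and duplication formulas -/

namespace PeriodPair
variable (L : PeriodPair)
open Filter Topology

lemma hasDerivAt_P_refl {c z : ℂ} (hw : c - z ∉ L.lattice) :
    HasDerivAt (fun z => L.weierstrassP (c - z)) (-L.derivWeierstrassP (c - z)) z := by
  simpa using (L.hasDerivAt_P hw).comp_const_sub c z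

lemma hasDerivAt_P'_refl {c z : ℂ} (hw : c - z ∉ L.lattice) :
    HasDerivAt (fun z => L.derivWeierstrassP (c - z))
      (-(6 * L.weierstrassP (c - z) ^ 2 - L.g₂ / 2)) z := by
  simpa using (L.hasDerivAt_P'' hw).comp_const_sub c z

/-- Euler's identity behind the addition theorem: on the line `z + w = c`, the expression
`((℘'(z) - ℘'(w)) / (℘(z) - ℘(w)))² / 4 - ℘(z) - ℘(w)` is locally constant. -/
lemma hasDerivAt_euler {c z : ℂ} (hz : z ∉ L.lattice) (hw : c - z ∉ L.lattice)
    (hB : L.weierstrassP z - L.weierstrassP (c - z) ≠ 0) :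
    HasDerivAt (fun z => (L.derivWeierstrassP z - L.derivWeierstrassP (c - z)) ^ 2 /
      (4 * (L.weierstrassP z - L.weierstrassP (c - z)) ^ 2) -
      L.weierstrassP z - L.weierstrassP (c - z)) 0 z := by
  have h1 := L.hasDerivAt_P hz
  have h2 := L.hasDerivAt_P'' hz
  have h3 := L.hasDerivAt_P_refl hw
  have h4 := L.hasDerivAt_P'_refl hw
  have hB2 : 4 * (L.weierstrassP z - L.weierstrassP (c - z)) ^ 2 ≠ 0 :=
    mul_ne_zero (by norm_num) (pow_ne_zero 2 hB)
  have h5 := ((((h2.sub h4).pow 2).div (((h1.sub h3).pow 2).const_mul 4) hB2).sub h1).sub h3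
  refine h5.congr_deriv ?_
  have e1 := L.derivWeierstrassP_sq z hz
  have e2 := L.derivWeierstrassP_sq (c - z) hw
  simp only [Pi.pow_apply, Pi.sub_apply]
  generalize L.derivWeierstrassP z = X' at *
  generalize L.derivWeierstrassP (c - z) = Y' at *
  generalize L.weierstrassP z = X at *
  generalize L.weierstrassP (c - z) = Y at *
  have h6 : X' ^ 2 - Y' ^ 2 = 4 * X ^ 3 - 4 * Y ^ 3 - L.g₂ * (X - Y) := by
    rw [e1, e2]; ring
  field_simp
  push_cast
  linear_combination (-4 * (X' - Y') * (X - Y)) * h6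

/-- The value of the locally constant expression of `hasDerivAt_euler` for `z` near `0` is `℘(c)`:
after cancellation of the poles at `0` it extends analytically to a function `Φ` with
`Φ 0 = ℘(c)`. -/
lemma euler_near_zero {c : ℂ} (hc : c ∉ L.lattice) :
    ∀ᶠ z in 𝓝[≠] (0 : ℂ), (L.derivWeierstrassP z - L.derivWeierstrassP (c - z)) ^ 2 =
      4 * (L.weierstrassP z - L.weierstrassP (c - z)) ^ 2 *
        (L.weierstrassP c + L.weierstrassP z + L.weierstrassP (c - z)) := by
  obtain ⟨a, ha⟩ : ∃ a, a = L.weierstrassPExcept 0 := ⟨_, rfl⟩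
  obtain ⟨b, hb⟩ : ∃ b, b = L.derivWeierstrassPExcept 0 := ⟨_, rfl⟩
  have haa : AnalyticAt ℂ a 0 := ha ▸ L.analyticAt_weierstrassPExcept 0
  have hba : AnalyticAt ℂ b 0 := hb ▸ L.analyticAt_derivWeierstrassPExcept 0
  have hsub : AnalyticAt ℂ (fun z => c - z) 0 := by fun_prop
  have hya : AnalyticAt ℂ (fun z => L.weierstrassP (c - z)) 0 :=
    AnalyticAt.fun_comp (by simpa using L.analyticAt_P hc) hsub
  have hy'a : AnalyticAt ℂ (fun z => L.derivWeierstrassP (c - z)) 0 :=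
    AnalyticAt.fun_comp (by simpa using L.analyticAt_P' hc) hsub
  obtain ⟨y, hy⟩ : ∃ y, y = fun z => L.weierstrassP (c - z) := ⟨_, rfl⟩
  obtain ⟨y', hy'⟩ : ∃ y, y = fun z => L.derivWeierstrassP (c - z) := ⟨_, rfl⟩
  rw [← hy] at hya
  rw [← hy'] at hy'a
  obtain ⟨Φ, hΦ⟩ : ∃ Φ : ℂ → ℂ, Φ = fun z =>
    (-(z * (b z - y' z)) + z ^ 4 * (b z - y' z) ^ 2 / 4 - 2 * (a z - y z)
      - z ^ 2 * (a z - y z) ^ 2) / (1 + z ^ 2 * (a z - y z)) ^ 2 - a z - y z := ⟨_, rfl⟩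
  have hden : (1 + (0 : ℂ) ^ 2 * (a 0 - y 0)) ^ 2 ≠ 0 := by simp
  have hΦa : AnalyticAt ℂ Φ 0 := by
    rw [hΦ]
    fun_prop (disch := exact hden)
  have hΦ0 : Φ 0 = L.weierstrassP c := by
    have : a 0 = 0 := by rw [ha, L.weierstrassPExcept_zero]
    rw [hΦ]
    simp [this, hy]
    ring
  have hden' : ∀ᶠ z in 𝓝 (0 : ℂ), 1 + z ^ 2 * (a z - y z) ≠ 0 := by
    have : ContinuousAt (fun z => 1 + z ^ 2 * (a z - y z)) 0 := by
      have := haa.continuousAt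
      have := hya.continuousAt
      fun_prop
    exact this.eventually_ne (by simp)
  -- away from `0`, the function `Φ` is the left side of Euler's identity
  have hrel : ∀ z, z ≠ 0 → 1 + z ^ 2 * (a z - y z) ≠ 0 →
      L.weierstrassP z - L.weierstrassP (c - z) ≠ 0 ∧
      Φ z = (L.derivWeierstrassP z - L.derivWeierstrassP (c - z)) ^ 2 /
      (4 * (L.weierstrassP z - L.weierstrassP (c - z)) ^ 2) -
      L.weierstrassP z - L.weierstrassP (c - z) := by
    intro z hz0 hd
    have e1 : L.weierstrassP z = 1 / z ^ 2 + a z := by rw [ha]; exact L.P_eq_add z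
    have e2 : L.derivWeierstrassP z = -2 / z ^ 3 + b z := by rw [hb]; exact L.P'_eq_add z
    have e3 : L.weierstrassP (c - z) = y z := by rw [hy]
    have e4 : L.derivWeierstrassP (c - z) = y' z := by rw [hy']
    have e5 : 1 / z ^ 2 + a z - y z = (1 + z ^ 2 * (a z - y z)) / z ^ 2 := by
      field_simp
      ring
    rw [e1, e2, e3, e4, hΦ, e5]
    refine ⟨div_ne_zero hd (pow_ne_zero 2 hz0), ?_⟩
    change (-(z * (b z - y' z)) + z ^ 4 * (b z - y' z) ^ 2 / 4 - 2 * (a z - y z)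
      - z ^ 2 * (a z - y z) ^ 2) / (1 + z ^ 2 * (a z - y z)) ^ 2 - a z - y z = _
    clear e5
    field_simp
    ring
  have hnl : ∀ᶠ z in 𝓝 (0 : ℂ), c - z ∉ L.lattice := by
    have : Tendsto (fun z => c - z) (𝓝 0) (𝓝 c) := by
      have h : Continuous fun z : ℂ => c - z := by fun_prop
      simpa using h.tendsto 0
    exact this.eventually (L.eventually_notMem hc)
  have hderiv : ∀ᶠ z in 𝓝[≠] (0 : ℂ), deriv Φ z = 0 := by
    filter_upwards [L.eventually_notMem_zero, hnl.filter_mono nhdsWithin_le_nhds,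
      hden'.eventually_nhds.filter_mono nhdsWithin_le_nhds, self_mem_nhdsWithin] with z h1 h2 h3 h4
    have h5 := L.hasDerivAt_euler h1 h2 (hrel z h4 h3.self_of_nhds).1
    refine (h5.congr_of_eventuallyEq ?_).deriv
    filter_upwards [h3, isOpen_ne.mem_nhds h4] with x hx hx0
    exact (hrel x hx0 hx).2
  have hderiv' : ∀ᶠ z in 𝓝 (0 : ℂ), deriv Φ z = 0 :=
    hΦa.deriv.frequently_zero_iff_eventually_zero.1 hderiv.frequently
  have hconst : ∀ᶠ z in 𝓝 (0 : ℂ), Φ z = L.weierstrassP c := by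
    obtain ⟨r, hr, hr'⟩ := Metric.eventually_nhds_iff_ball.1
      (hderiv'.and hΦa.eventually_analyticAt)
    filter_upwards [Metric.ball_mem_nhds 0 hr] with x hx
    rw [← hΦ0]
    exact Metric.isOpen_ball.is_const_of_deriv_eq_zero (convex_ball 0 r).isPreconnected
      (fun y hy => (hr' y hy).2.differentiableAt.differentiableWithinAt)
      (fun y hy => (hr' y hy).1) hx (Metric.mem_ball_self hr)
  filter_upwards [hconst.filter_mono nhdsWithin_le_nhds, hden'.filter_mono nhdsWithin_le_nhds,
    self_mem_nhdsWithin] with z h1 h2 h3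
  obtain ⟨h4, h5⟩ := hrel z h3 h2
  rw [h1] at h5
  rw [h5]
  field_simp
  ring

/-- Addition theorem for `℘`, with `c = z + w` and denominators cleared. It holds for `z` near `0`, hence
by analytic continuation on the complement of the lattice and of its translate by `c`. -/
lemma addition {c z : ℂ} (hc : c ∉ L.lattice) (hz : z ∉ L.lattice) (hw : c - z ∉ L.lattice) :
    (L.derivWeierstrassP z - L.derivWeierstrassP (c - z)) ^ 2 =
      4 * (L.weierstrassP z - L.weierstrassP (c - z)) ^ 2 *
        (L.weierstrassP c + L.weierstrassP z + L.weierstrassP (c - z)) := by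
  obtain ⟨U, hU⟩ : ∃ U : Set ℂ, U = ((L.lattice : Set ℂ) ∪ (fun z => c - z) '' L.lattice)ᶜ :=
    ⟨_, rfl⟩
  have hmem : ∀ x, x ∈ U ↔ x ∉ L.lattice ∧ c - x ∉ L.lattice := by
    intro x
    rw [hU]
    simp only [Set.mem_compl_iff, Set.mem_union, not_or]
    refine and_congr Iff.rfl (not_congr ⟨?_, fun h => ⟨c - x, h, by simp⟩⟩)
    rintro ⟨l, hl, rfl⟩
    simpa using hl
  have hpre : IsPreconnected U := by
    rw [hU]
    exact (Set.Countable.isConnected_compl_of_one_lt_rank (by simp)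
      (L.countable_lattice.union (L.countable_lattice.image _))).isPreconnected
  have han1 : AnalyticOnNhd ℂ (fun z => (L.derivWeierstrassP z - L.derivWeierstrassP (c - z)) ^ 2)
      U := by
    intro x hx
    obtain ⟨h1, h2⟩ := (hmem x).1 hx
    have hsub : AnalyticAt ℂ (fun z => c - z) x := by fun_prop
    exact ((L.analyticAt_P' h1).sub ((L.analyticAt_P' h2).fun_comp hsub)).pow 2
  have han2 : AnalyticOnNhd ℂ (fun z => 4 * (L.weierstrassP z - L.weierstrassP (c - z)) ^ 2 *
        (L.weierstrassP c + L.weierstrassP z + L.weierstrassP (c - z))) U := by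
    intro x hx
    obtain ⟨h1, h2⟩ := (hmem x).1 hx
    have hsub : AnalyticAt ℂ (fun z => c - z) x := by fun_prop
    have h3 := L.analyticAt_P h1
    have h4 := (L.analyticAt_P h2).fun_comp hsub
    exact (analyticAt_const.mul ((h3.sub h4).pow 2)).mul ((analyticAt_const.add h3).add h4)
  have hnl : ∀ᶠ z in 𝓝 (0 : ℂ), c - z ∉ L.lattice := by
    have : Tendsto (fun z => c - z) (𝓝 0) (𝓝 c) := by
      have h : Continuous fun z : ℂ => c - z := by fun_prop
      simpa using h.tendsto 0
    exact this.eventually (L.eventually_notMem hc)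
  obtain ⟨r, hr, hr'⟩ := Metric.eventually_nhds_iff_ball.1
    ((eventually_nhdsWithin_iff.1 (L.euler_near_zero hc)).and
      ((eventually_nhdsWithin_iff.1 L.eventually_notMem_zero).and hnl))
  obtain ⟨x₀, hx₀⟩ : ∃ x₀ : ℂ, x₀ = ((r / 2 : ℝ) : ℂ) := ⟨_, rfl⟩
  have hx0 : x₀ ≠ 0 := by
    rw [hx₀]
    exact_mod_cast (by positivity : r / 2 ≠ 0)
  have hxb : x₀ ∈ Metric.ball (0 : ℂ) r := by
    rw [hx₀, mem_ball_zero_iff, Complex.norm_real, Real.norm_of_nonneg (by positivity)]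
    linarith
  have hxU : x₀ ∈ U := (hmem x₀).2 ⟨(hr' x₀ hxb).2.1 hx0, (hr' x₀ hxb).2.2⟩
  refine han1.eqOn_of_preconnected_of_eventuallyEq han2 hpre hxU ?_ ((hmem z).2 ⟨hz, hw⟩)
  filter_upwards [Metric.isOpen_ball.mem_nhds hxb, isOpen_ne.mem_nhds hx0] with x h1 h2
  exact (hr' x h1).1 h2
end PeriodPair

namespace PeriodPair
variable (L : PeriodPair)
open Filter Topology

/-- Duplication formula, the limit of the addition theorem on the diagonal. -/
lemma duplication {z : ℂ} (hz : z ∉ L.lattice) (h2z : 2 * z ∉ L.lattice) :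
    (6 * L.weierstrassP z ^ 2 - L.g₂ / 2) ^ 2 =
      4 * L.derivWeierstrassP z ^ 2 * (L.weierstrassP (2 * z) + 2 * L.weierstrassP z) := by
  have hw : 2 * z - z ∉ L.lattice := by rwa [two_mul, add_sub_cancel_right]
  have hzz : 2 * z - z = z := by ring
  have s1 := ((L.hasDerivAt_P'' hz).sub (L.hasDerivAt_P'_refl hw)).tendsto_slope
  have s2 := ((L.hasDerivAt_P hz).sub (L.hasDerivAt_P_refl hw)).tendsto_slope
  have c1 : Tendsto (fun x => L.weierstrassP (2 * z) + L.weierstrassP x +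
      L.weierstrassP (2 * z - x)) (𝓝[≠] z)
      (𝓝 (L.weierstrassP (2 * z) + L.weierstrassP z + L.weierstrassP z)) := by
    have h1 := (L.hasDerivAt_P hz).continuousAt
    have h2 := (L.hasDerivAt_P_refl hw).continuousAt
    have h3 := ((continuousAt_const (y := L.weierstrassP (2 * z))).add h1).add h2
    have h4 := h3.tendsto.mono_left (nhdsWithin_le_nhds (s := {z}ᶜ))
    simpa [hzz] using! h4
  have l1 := s1.pow 2
  have l2 := ((s2.pow 2).const_mul 4).mul c1
  have hev : ∀ᶠ x in 𝓝[≠] z, x ∉ L.lattice ∧ 2 * z - x ∉ L.lattice := by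
    refine Eventually.filter_mono nhdsWithin_le_nhds ((L.eventually_notMem hz).and ?_)
    have h : Continuous fun x : ℂ => 2 * z - x := by fun_prop
    exact (h.tendsto z).eventually (by simpa [hzz] using L.eventually_notMem hz)
  have := tendsto_nhds_unique l1 (l2.congr' ?_)
  · rw [hzz] at this
    linear_combination this / 4
  · filter_upwards [hev, self_mem_nhdsWithin] with x hx hxz
    have h := L.addition h2z hx.1 hx.2
    have hne : x - z ≠ 0 := sub_ne_zero.2 hxz
    simp only [slope_def_field, Pi.sub_apply, hzz, sub_self, sub_zero]
    rw [div_pow, div_pow, h]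
    ring

/-- If `℘'(z) = 0` then `z` is a point of order two: otherwise the duplication formula gives
`℘''(z) = 0` and the second order equation would make `℘` constant. -/
lemma P'_ne_zero {z : ℂ} (hz : z ∉ L.lattice) (h2z : 2 * z ∉ L.lattice) :
    L.derivWeierstrassP z ≠ 0 := by
  intro h0
  have h1 := L.duplication hz h2z
  rw [h0] at h1
  have h2 : 6 * L.weierstrassP z ^ 2 - L.g₂ / 2 = 0 := by
    refine pow_eq_zero_iff (two_ne_zero) |>.1 ?_
    rw [h1]; ring
  refine L.not_eventually_const hz (L.weierstrassP z)
    (eventually_const_of_tay (L.analyticAt_P hz) fun n => ?_)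
  induction n using Nat.strong_induction_on with
  | _ n ih =>
  intro hn
  match n, hn, ih with
  | 1, _, _ => rw [coeff_tay, iteratedDeriv_one, L.deriv_weierstrassP, h0, zero_div]
  | (t + 2), _, ih =>
    have h3 := congrArg (PowerSeries.coeff t) (L.tay_ode hz)
    rw [PowerSeries.coeff_derivative, PowerSeries.coeff_derivative] at h3
    have h4 : PowerSeries.coeff t (6 * tay z L.weierstrassP ^ 2 - PowerSeries.C (L.g₂ / 2)) = 0 := by
      have h6 : (6 : PowerSeries ℂ) = PowerSeries.C (6 : ℂ) := (map_ofNat PowerSeries.C 6).symm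
      rw [map_sub, h6, PowerSeries.coeff_C_mul, sq, PowerSeries.coeff_mul, PowerSeries.coeff_C]
      rcases Nat.eq_zero_or_pos t with ht | ht
      · subst ht
        simp [coeff_zero_tay]
        linear_combination h2
      · rw [if_neg ht.ne', sub_zero, Finset.sum_eq_zero, mul_zero]
        intro ij hij
        have hij' := Finset.HasAntidiagonal.mem_antidiagonal.1 hij
        rcases Nat.eq_zero_or_pos ij.1 with hi | hi
        · rw [ih ij.2 (by omega) (by omega), mul_zero]
        · rw [ih ij.1 (by omega) (by omega), zero_mul]
    rw [h4] at h3
    have h5 : ((t : ℂ) + 1) ≠ 0 := by exact_mod_cast t.succ_ne_zero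
    have h7 : (((t + 1 : ℕ) : ℂ) + 1) ≠ 0 := by exact_mod_cast (t + 1).succ_ne_zero
    have h8 := (mul_eq_zero.1 h3).resolve_right h5
    exact (mul_eq_zero.1 h8).resolve_right h7

/-- Derivative of the duplication formula. -/
lemma duplication' {z : ℂ} (hz : z ∉ L.lattice) (h2z : 2 * z ∉ L.lattice) :
    2 * (6 * L.weierstrassP z ^ 2 - L.g₂ / 2) * (12 * L.weierstrassP z * L.derivWeierstrassP z) =
      8 * L.derivWeierstrassP z * (6 * L.weierstrassP z ^ 2 - L.g₂ / 2) *
        (L.weierstrassP (2 * z) + 2 * L.weierstrassP z) +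
      4 * L.derivWeierstrassP z ^ 2 *
        (2 * L.derivWeierstrassP (2 * z) + 2 * L.derivWeierstrassP z) := by
  have hP := L.hasDerivAt_P hz
  have hP' := L.hasDerivAt_P'' hz
  have h2 : HasDerivAt (fun z => L.weierstrassP (2 * z)) (L.derivWeierstrassP (2 * z) * 2) z := by
    have := HasDerivAt.comp (h₂ := L.weierstrassP) z (L.hasDerivAt_P h2z)
      ((hasDerivAt_id z).const_mul 2)
    simpa using! this
  have hl := (((hP.pow 2).const_mul 6).sub_const (L.g₂ / 2)).pow 2
  have hr := ((hP'.pow 2).const_mul 4).mul (h2.add (hP.const_mul 2))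
  have := hl.unique (hr.congr_of_eventuallyEq ?_)
  · simp only [Pi.pow_apply, Pi.add_apply] at this
    push_cast at this
    linear_combination this
  · have h : Continuous fun x : ℂ => 2 * x := by fun_prop
    filter_upwards [L.eventually_notMem hz, (h.tendsto z).eventually (L.eventually_notMem h2z)]
      with x h1 h2
    exact L.duplication h1 h2
end PeriodPair

/-! ### Algebraic points and conclusion -/

lemma eq_zero_of_infinite_roots {n : ℕ} (b : Fin n → ℂ) {S : Set ℂ} (hS : S.Infinite)
    (h : ∀ x ∈ S, ∑ i, b i * x ^ (i : ℕ) = 0) : b = 0 := by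
  obtain ⟨q, hq⟩ : ∃ q : Polynomial ℂ, q = ∑ i, Polynomial.C (b i) * Polynomial.X ^ (i : ℕ) :=
    ⟨_, rfl⟩
  have hq0 : q = 0 := Polynomial.eq_zero_of_infinite_isRoot q (hS.mono fun x hx => by
    have := h x hx
    simpa [hq, Polynomial.eval_finsetSum] using this)
  ext i
  have h1 := congrArg (fun r => Polynomial.coeff r (i : ℕ)) hq0
  rw [hq] at h1
  simpa [Polynomial.finsetSum_coeff, Polynomial.coeff_C_mul, Polynomial.coeff_X_pow,
    Fin.val_inj] using h1

lemma map_derivative_ps {R S : Type*} [CommRing R] [CommRing S] (φ : R →+* S) (Y : PowerSeries R) :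
    PowerSeries.map φ (PowerSeries.derivative R Y) =
      PowerSeries.derivative S (PowerSeries.map φ Y) := by
  ext n
  simp [PowerSeries.coeff_derivative]

namespace PeriodPair
variable (L : PeriodPair)
open Filter Topology

lemma infinite_values : (L.weierstrassP '' (L.latticeᶜ : Set ℂ)).Infinite := by
  intro hfin
  obtain ⟨C, hC⟩ := hfin.isBounded.exists_norm_le
  obtain ⟨x, hx1, hx2⟩ := ((L.tendsto_P_zero.eventually_gt_atTop C).and
    L.eventually_notMem_zero).exists
  exact (hC _ ⟨x, hx2, rfl⟩).not_gt hx1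

lemma mul_nat_ω₁_mem (n : ℕ) : (n : ℂ) * L.ω₁ ∈ L.lattice :=
  mem_lattice.2 ⟨n, 0, by simp⟩

lemma add_mem_iff_aux {z l : ℂ} (hz : z ∉ L.lattice) (hl : l ∈ L.lattice) : z + l ∉ L.lattice :=
  fun h => hz (by simpa using sub_mem h hl)

/-- `z` and `℘(z)` are algebraically independent functions: translation by multiples of a period
moves `z` and fixes `℘`. -/
lemma algIndep {N : ℕ} (a : Fin N → Fin N → ℂ)
    (h : ∀ w ∉ L.lattice, ∑ i, ∑ j, a i j * w ^ (i : ℕ) * L.weierstrassP w ^ (j : ℕ) = 0) :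
    a = 0 := by
  have hω : L.ω₁ ≠ 0 := L.indep.ne_zero 0
  have h1 : ∀ w ∉ L.lattice, (fun i => ∑ j, a i j * L.weierstrassP w ^ (j : ℕ)) = 0 := by
    intro w hw
    refine eq_zero_of_infinite_roots _ (S := Set.range fun n : ℕ => w + n * L.ω₁)
      (Set.infinite_range_of_injective fun m n hmn => ?_) ?_
    · have h2 : (m : ℂ) * L.ω₁ = n * L.ω₁ := add_left_cancel hmn
      exact_mod_cast mul_right_cancel₀ hω h2
    · rintro _ ⟨n, rfl⟩
      have h2 := h _ (L.add_mem_iff_aux hw (L.mul_nat_ω₁_mem n))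
      have h3 : L.weierstrassP (w + n * L.ω₁) = L.weierstrassP w :=
        L.weierstrassP_add_coe w ⟨_, L.mul_nat_ω₁_mem n⟩
      rw [h3] at h2
      rw [← h2]
      refine Finset.sum_congr rfl fun i _ => ?_
      rw [Finset.sum_mul]
      refine Finset.sum_congr rfl fun j _ => by ring
  ext1 i
  refine eq_zero_of_infinite_roots (a i) L.infinite_values ?_
  rintro _ ⟨w, hw, rfl⟩
  exact congrFun (h1 w hw) i

section
variable {K : Type*} [Field K] (φ : K →+* ℂ)

/-- By the second order equation, the Taylor coefficients of `℘` at `z` are defined over any field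
containing `g₂`, `℘(z)` and `℘'(z)`. -/
lemma exists_taylor {G : K} (hG : φ G = L.g₂) {z : ℂ} (hz : z ∉ L.lattice)
    (hx : L.weierstrassP z ∈ φ.fieldRange) (hx' : L.derivWeierstrassP z ∈ φ.fieldRange) :
    ∃ Y : PowerSeries K, PowerSeries.map φ Y = tay z L.weierstrassP := by
  have key : ∀ n, PowerSeries.coeff n (tay z L.weierstrassP) ∈ φ.fieldRange := by
    intro n
    induction n using Nat.strong_induction_on with
    | _ n ih =>
    match n, ih with
    | 0, _ => rwa [coeff_zero_tay]
    | 1, _ =>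
      rw [coeff_tay, iteratedDeriv_one, L.deriv_weierstrassP]
      simpa using hx'
    | (t + 2), ih =>
      have h3 := congrArg (PowerSeries.coeff t) (L.tay_ode hz)
      rw [PowerSeries.coeff_derivative, PowerSeries.coeff_derivative] at h3
      have h6 : (6 : PowerSeries ℂ) = PowerSeries.C (6 : ℂ) := (map_ofNat PowerSeries.C 6).symm
      rw [map_sub, h6, PowerSeries.coeff_C_mul, sq, PowerSeries.coeff_mul,
        PowerSeries.coeff_C] at h3
      have h5 : ((t : ℂ) + 1) ≠ 0 := by exact_mod_cast t.succ_ne_zero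
      have h7 : (((t + 1 : ℕ) : ℂ) + 1) ≠ 0 := by exact_mod_cast (t + 1).succ_ne_zero
      have h8 := (eq_div_iff h7).2 ((eq_div_iff h5).2 h3)
      rw [h8]
      have hg : L.g₂ ∈ φ.fieldRange := ⟨G, hG⟩
      have hg2 : L.g₂ / 2 ∈ φ.fieldRange := div_mem hg (ofNat_mem _ 2)
      refine div_mem (div_mem (sub_mem (mul_mem (ofNat_mem _ 6) (sum_mem fun ij hij => ?_)) ?_) ?_) ?_
      · have hij' := Finset.HasAntidiagonal.mem_antidiagonal.1 hij
        exact mul_mem (ih _ (by omega)) (ih _ (by omega))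
      · split_ifs
        · exact hg2
        · exact zero_mem _
      · exact add_mem (natCast_mem _ _) (one_mem _)
      · exact add_mem (natCast_mem _ _) (one_mem _)
  choose c hc using key
  refine ⟨PowerSeries.mk c, ?_⟩
  ext n
  rw [PowerSeries.coeff_map, PowerSeries.coeff_mk, hc]

/-- If `g₂`, `℘(z)` and `℘'(z)` lie in `K`, so do `℘(2z)` and `℘'(2z)`. -/
lemma double_mem {G : K} (hG : φ G = L.g₂) {z : ℂ} (hz : z ∉ L.lattice) (h2z : 2 * z ∉ L.lattice)
    (hx : L.weierstrassP z ∈ φ.fieldRange) (hx' : L.derivWeierstrassP z ∈ φ.fieldRange) :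
    L.weierstrassP (2 * z) ∈ φ.fieldRange ∧ L.derivWeierstrassP (2 * z) ∈ φ.fieldRange := by
  obtain ⟨x, hx⟩ := hx
  obtain ⟨x', hx'⟩ := hx'
  have h0 := L.P'_ne_zero hz h2z
  have h1 := L.duplication hz h2z
  have h2 := L.duplication' hz h2z
  have e1 : φ ((6 * x ^ 2 - G / 2) ^ 2 / (4 * x' ^ 2) - 2 * x) = L.weierstrassP (2 * z) := by
    simp only [map_sub, map_div₀, map_mul, map_pow, map_ofNat, hx, hx', hG]
    rw [h1]
    field_simp
    ring
  refine ⟨⟨_, e1⟩, ?_⟩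
  obtain ⟨y, hy⟩ : ∃ y, φ y = L.weierstrassP (2 * z) := ⟨_, e1⟩
  refine ⟨(2 * (6 * x ^ 2 - G / 2) * (12 * x * x') -
    8 * x' * (6 * x ^ 2 - G / 2) * (y + 2 * x)) / (8 * x' ^ 2) - x', ?_⟩
  simp only [map_sub, map_add, map_div₀, map_mul, map_pow, map_ofNat, hx, hx', hG, hy]
  rw [h2]
  field_simp
  ring

/-- Infinitely many points defined over `K` at which `℘` and `℘'` are defined over `K`: the
translates `p + k n p` when `n p` is a period, the points `2ᵏ p` when no multiple of `p` is. -/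
lemma exists_points [CharZero K] {G : K} (hG : φ G = L.g₂) {p : K} (hp : φ p ∉ L.lattice)
    (hx : L.weierstrassP (φ p) ∈ φ.fieldRange) (hx' : L.derivWeierstrassP (φ p) ∈ φ.fieldRange) :
    ∃ z : ℕ → K, Function.Injective z ∧ ∀ k, φ (z k) ∉ L.lattice ∧
      L.weierstrassP (φ (z k)) ∈ φ.fieldRange ∧ L.derivWeierstrassP (φ (z k)) ∈ φ.fieldRange := by
  have hp0 : p ≠ 0 := by
    rintro rfl
    exact hp (by simp)
  by_cases htor : ∃ n : ℕ, n ≠ 0 ∧ (n : ℂ) * φ p ∈ L.lattice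
  · obtain ⟨n, hn, hnp⟩ := htor
    have hk : ∀ k : ℕ, (k : ℂ) * (n * φ p) ∈ L.lattice := fun k => by
      simpa using L.lattice.smul_mem (k : ℤ) hnp
    refine ⟨fun k => p + k * (n * p), fun j k hjk => ?_, fun k => ?_⟩
    · have h1 : (j : K) * (n * p) = k * (n * p) := add_left_cancel hjk
      exact_mod_cast mul_right_cancel₀ (mul_ne_zero (Nat.cast_ne_zero.2 hn) hp0) h1
    · have h1 : φ (p + k * (n * p)) = φ p + k * (n * φ p) := by simp
      have h2 : L.weierstrassP (φ p + k * (n * φ p)) = L.weierstrassP (φ p) :=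
        L.weierstrassP_add_coe _ ⟨_, hk k⟩
      have h3 : L.derivWeierstrassP (φ p + k * (n * φ p)) = L.derivWeierstrassP (φ p) :=
        L.derivWeierstrassP_add_coe _ ⟨_, hk k⟩
      simp only [h1, h2, h3]
      exact ⟨L.add_mem_iff_aux hp (hk k), hx, hx'⟩
  · push Not at htor
    have hnm : ∀ k : ℕ, φ (2 ^ k * p) ∉ L.lattice := fun k => by
      have h1 : φ (2 ^ k * p) = ((2 ^ k : ℕ) : ℂ) * φ p := by
        simp only [map_mul, map_pow, map_ofNat, Nat.cast_pow, Nat.cast_ofNat]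
      rw [h1]
      exact htor (2 ^ k) (by positivity)
    refine ⟨fun k => 2 ^ k * p, fun j k hjk => ?_, fun k => ⟨hnm k, ?_⟩⟩
    · have h1 : (2 : K) ^ j = 2 ^ k := mul_right_cancel₀ hp0 hjk
      have h2 : 2 ^ j = 2 ^ k := by exact_mod_cast h1
      exact Nat.pow_right_injective le_rfl h2
    · induction k with
      | zero => simpa using ⟨hx, hx'⟩
      | succ k ih =>
        have h1 : φ (2 ^ (k + 1) * p) = 2 * φ (2 ^ k * p) := by
          simp only [map_mul, map_pow, map_ofNat]
          ring
        have h2 := hnm (k + 1)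
        rw [h1] at h2 ⊢
        exact L.double_mem φ hG (hnm k) h2 ih.1 ih.2

/-- Schneider's theorem for `℘`: over a number field containing `g₂` there is no point `p` off the
lattice with `p`, `℘(p)` and `℘'(p)` all in the field. -/
lemma no_points [NumberField K] {G : K} (hG : φ G = L.g₂) {p : K} (hp : φ p ∉ L.lattice)
    (hx : L.weierstrassP (φ p) ∈ φ.fieldRange) (hx' : L.derivWeierstrassP (φ p) ∈ φ.fieldRange) :
    False := by
  obtain ⟨z, hz, hzk⟩ := L.exists_points φ hG hp hx hx'
  have hY := fun k => L.exists_taylor φ hG (hzk k).1 (hzk k).2.1 (hzk k).2.2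
  choose Y hY using hY
  obtain ⟨C, hC, h1, h2⟩ := L.exists_growth
  refine schneider_core φ L.differentiable_sig L.differentiable_sigQ hC h1 h2 z hz
    (fun k => L.sig_ne_zero (hzk k).1) Y (fun k => ?_) (G / 2) (fun k => ?_) fun N a ha => ?_
  · rw [hY]
    refine tay_congr ?_
    filter_upwards [L.eventually_notMem (hzk k).1] with x hx
    exact L.weierstrassP_eq_sigQ hx
  · have hinj : Function.Injective (PowerSeries.map φ) := by
      intro u v huv
      ext n
      have := congrArg (PowerSeries.coeff n) huv
      rw [PowerSeries.coeff_map, PowerSeries.coeff_map] at this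
      exact φ.injective this
    have hG2 : φ (G / 2) = L.g₂ / 2 := by rw [map_div₀, hG, map_ofNat]
    apply hinj
    rw [map_derivative_ps, map_derivative_ps, hY, L.tay_ode (hzk k).1, map_sub, map_mul, map_pow,
      hY, PowerSeries.map_C, hG2, map_ofNat]
  · refine L.algIndep a fun w hw => ?_
    rw [L.weierstrassP_eq_sigQ hw]
    exact ha w (L.sig_ne_zero hw)
end
end PeriodPair

/-- If `Ω` is a lattice in `ℂ`, `p ∈ ℂ ∖ Ω`, and `g₂`, `g₃`, `℘(p)` are algebraic over `ℚ`,
then `p` is transcendental over `ℚ`. -/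
theorem transcendental_of_isAlgebraic_wP (ω₁ ω₂ : ℂ) (hΩ : IsLatticeBasis ω₁ ω₂)
    (p : ℂ) (hp : p ∉ LatticePts ω₁ ω₂)
    (hg2 : IsAlgebraic ℚ (g2 ω₁ ω₂)) (hg3 : IsAlgebraic ℚ (g3 ω₁ ω₂))
    (hP : IsAlgebraic ℚ (wP ω₁ ω₂ p)) :
    Transcendental ℚ p := by
  intro hpalg
  rw [wP_eq hΩ hp] at hP
  rw [g2_eq hΩ] at hg2
  rw [g3_eq hΩ] at hg3
  rw [hΩ.latticePts, SetLike.mem_coe] at hp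
  -- `℘'(p)² = 4 ℘(p)³ - g₂ ℘(p) - g₃` is the only place where `g₃` enters.
  have hP' : IsAlgebraic ℚ (hΩ.pair.derivWeierstrassP p) := by
    refine IsAlgebraic.of_pow two_pos ?_
    rw [hΩ.pair.derivWeierstrassP_sq p hp]
    have h4 : IsAlgebraic ℚ (4 : ℂ) := by
      simpa using isAlgebraic_algebraMap (A := ℂ) (4 : ℚ)
    exact ((h4.mul (hP.pow 3)).sub (hg2.mul hP)).sub hg3
  obtain ⟨S, hS⟩ : ∃ S : Set ℂ, S =
      {p, hΩ.pair.g₂, hΩ.pair.weierstrassP p, hΩ.pair.derivWeierstrassP p} := ⟨_, rfl⟩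
  have hfin : FiniteDimensional ℚ (IntermediateField.adjoin ℚ S) := by
    have : Finite S := by rw [hS]; exact Set.toFinite _
    refine IntermediateField.finiteDimensional_adjoin fun x hx => ?_
    rw [hS] at hx
    rcases hx with rfl | rfl | rfl | rfl
    · exact hpalg.isIntegral
    · exact hg2.isIntegral
    · exact hP.isIntegral
    · exact hP'.isIntegral
  have hNF : NumberField (IntermediateField.adjoin ℚ S) := ⟨⟩
  have hmem : ∀ x ∈ S, ∃ y : IntermediateField.adjoin ℚ S,
      algebraMap (IntermediateField.adjoin ℚ S) ℂ y = x :=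
    fun x hx => ⟨⟨x, IntermediateField.subset_adjoin ℚ S hx⟩, rfl⟩
  obtain ⟨q, hq⟩ := hmem p (by simp [hS])
  obtain ⟨G, hG⟩ := hmem hΩ.pair.g₂ (by simp [hS])
  have hx := hmem (hΩ.pair.weierstrassP p) (by simp [hS])
  have hx' := hmem (hΩ.pair.derivWeierstrassP p) (by simp [hS])
  rw [← hq] at hp hx hx'
  exact hΩ.pair.no_points _ hG hp hx hx'
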